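/- arXiv:0902.0943 — 2 statements merged into one kernel-verified Lean document; each statement's English description precedes it below -/
import Mathlib

section
/- Let 0 < p_0 < p_1 < ∞, let (Ω, μ) be a measure space, let {F_j}_{j∈ℤ} be a sequence of measurable functions on Ω (only finitely many nonzero), let {s_j} be nonnegative numbers and M > 0, and assume that for all j the inequality ‖F_j‖_{L^{p_ν}}^{p_ν} ≤ 2^{j p_ν} M^{p_ν} s_j holds for ν = 0 and ν = 1. Then for every p ∈ (p_0, p_1) there is a constant C = C(p_0, p_1, p) such that ‖∑_j F_j‖_{L^p}^p ≤ C^p M^p ∑_j 2^{jp} s_j. Moreover, the analogous statement holds with p_0 = 0, where the hypothesis for ν = 0 is replaced by μ({x : F_j(x) ≠ 0}) ≤ s_j, and then the conclusion holds for all 0 < p < p_1. -/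
open MeasureTheory Set
open scoped ENNReal NNReal

noncomputable section

lemma dy_summable (g : ℝ) (hg : 0 < g) :
    Summable (fun j : ℤ => (2:ℝ) ^ (-(g * |(j:ℝ)|))) := by
  have h1 : Summable (fun n : ℕ => ((2:ℝ) ^ (-g)) ^ n) := by
    apply summable_geometric_of_lt_one (by positivity)
    exact Real.rpow_lt_one_of_one_lt_of_neg (by norm_num) (by linarith)
  have h2 : ∀ n : ℕ, ((2:ℝ) ^ (-g)) ^ n = (2:ℝ) ^ (-(g * (n:ℝ))) := by
    intro n
    rw [← Real.rpow_natCast, ← Real.rpow_mul (by norm_num)]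
    congr 1; ring
  simp only [h2] at h1
  apply Summable.of_nat_of_neg
  · simpa using h1
  · simpa using h1

lemma dy_single (p q u a : ℝ) (j : ℤ) (hq : 0 < q) (ha : 0 ≤ a)
    (h : 2 ^ ((j:ℝ) * (p - q)) * a ^ q ≤ (2:ℝ) ^ (u * p)) :
    a ≤ 2 ^ (u + (u - j) * ((p - q) / q)) := by
  have h2 : a ^ q ≤ ((2:ℝ) ^ (u + (u - j) * ((p - q) / q))) ^ q := by
    rw [← Real.rpow_mul (by norm_num)]
    have e : (u + (u - j) * ((p - q) / q)) * q = u * p - (j:ℝ) * (p - q) := by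
      field_simp; ring
    rw [e, Real.rpow_sub (by norm_num), le_div_iff₀ (by positivity)]
    linarith
  exact (Real.rpow_le_rpow_iff ha (by positivity) hq).1 h2

lemma dy_pointwise (p₀ p₁ p : ℝ) (h0 : 0 < p₀) (h0p : p₀ < p) (hp1 : p < p₁) :
    ∃ C : ℝ, 0 < C ∧ ∀ (S : Finset ℤ) (a : ℤ → ℝ), (∀ j, 0 ≤ a j) →
      (∑ j ∈ S, a j) ^ p ≤ C ^ p * ∑ j ∈ S, (2 ^ ((j:ℝ) * (p - p₀)) * a j ^ p₀
        + 2 ^ ((j:ℝ) * (p - p₁)) * a j ^ p₁) := by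
  have hp : 0 < p := by linarith
  have h1 : 0 < p₁ := by linarith
  set β := (p - p₀) / p₀ with hβ
  set α := (p₁ - p) / p₁ with hα
  have hβ0 : 0 < β := div_pos (by linarith) h0
  have hα0 : 0 < α := div_pos (by linarith) h1
  have hα' : (p - p₁) / p₁ = -α := by rw [hα]; ring
  set g := min α β with hg
  have hg0 : 0 < g := lt_min hα0 hβ0
  have hsum := dy_summable g hg0
  set K := ∑' j : ℤ, (2:ℝ) ^ (-(g * |(j:ℝ)|)) with hK
  have hK0 : 0 < K := hsum.tsum_pos (fun j => by positivity) 0 (by positivity)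
  refine ⟨2 ^ β * K, by positivity, ?_⟩
  intro S a ha
  set T : ℤ → ℝ := fun j => 2 ^ ((j:ℝ) * (p - p₀)) * a j ^ p₀
        + 2 ^ ((j:ℝ) * (p - p₁)) * a j ^ p₁ with hT
  have hA : ∀ j : ℤ, 0 ≤ 2 ^ ((j:ℝ) * (p - p₀)) * a j ^ p₀ := fun j =>
    mul_nonneg (by positivity) (Real.rpow_nonneg (ha j) _)
  have hB : ∀ j : ℤ, 0 ≤ 2 ^ ((j:ℝ) * (p - p₁)) * a j ^ p₁ := fun j =>
    mul_nonneg (by positivity) (Real.rpow_nonneg (ha j) _)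
  have hT0 : ∀ j, 0 ≤ T j := fun j => add_nonneg (hA j) (hB j)
  change _ ≤ _ * ∑ j ∈ S, T j
  set N := ∑ j ∈ S, T j with hN
  have hN0 : 0 ≤ N := Finset.sum_nonneg fun j _ => hT0 j
  have hTN : ∀ j ∈ S, T j ≤ N := fun j hj => Finset.single_le_sum (fun i _ => hT0 i) hj
  rcases hN0.eq_or_lt with hz | hpos
  · have : ∀ j ∈ S, a j = 0 := by
      intro j hj
      have h3 := hTN j hj
      have h4 : 2 ^ ((j:ℝ) * (p - p₀)) * a j ^ p₀ = 0 := by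
        have := hA j; have := hB j; simp only [hT] at h3; linarith
      have h5 : a j ^ p₀ = 0 := by
        rcases mul_eq_zero.1 h4 with h | h
        · exact absurd h (by positivity)
        · exact h
      exact (Real.rpow_eq_zero (ha j) h0.ne').1 h5
    rw [Finset.sum_eq_zero this, Real.zero_rpow hp.ne', ← hz]; simp
  · set u := Real.logb 2 N / p with hu
    have hup : (2:ℝ) ^ (u * p) = N := by
      rw [hu, div_mul_cancel₀ _ hp.ne', Real.rpow_logb (by norm_num) (by norm_num) hpos]
    set k := ⌊u⌋ with hk
    have hk1 : (k:ℝ) ≤ u := Int.floor_le u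
    have hk2 : u < k + 1 := Int.lt_floor_add_one u
    have key : ∀ j ∈ S, a j ≤ 2 ^ u * 2 ^ β * 2 ^ (-(g * |((j - k : ℤ):ℝ)|)) := by
      intro j hj
      have h3 := hTN j hj
      have hAj := hA j
      have hBj := hB j
      simp only [hT] at h3
      have e0 := dy_single p p₀ u (a j) j h0 (ha j) (by rw [hup]; linarith)
      have e1 := dy_single p p₁ u (a j) j h1 (ha j) (by rw [hup]; linarith)
      rw [hα'] at e1
      rw [← hβ] at e0
      rw [← Real.rpow_add (by norm_num), ← Real.rpow_add (by norm_num)]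
      push_cast
      have ga : g ≤ α := min_le_left _ _
      have gb : g ≤ β := min_le_right _ _
      rcases le_total k j with hjk | hjk
      · have hjk' : (k:ℝ) ≤ j := by exact_mod_cast hjk
        refine e0.trans (Real.rpow_le_rpow_of_exponent_le (by norm_num) ?_)
        rw [abs_of_nonneg (by linarith)]
        nlinarith
      · have hjk' : (j:ℝ) ≤ k := by exact_mod_cast hjk
        refine e1.trans (Real.rpow_le_rpow_of_exponent_le (by norm_num) ?_)
        rw [abs_of_nonpos (by linarith)]
        nlinarith
    have hs2 : Summable (fun j : ℤ => (2:ℝ) ^ (-(g * |((j - k : ℤ):ℝ)|))) :=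
      (Equiv.subRight k).summable_iff.2 hsum
    have ht2 : ∑' j : ℤ, (2:ℝ) ^ (-(g * |((j - k : ℤ):ℝ)|)) = K :=
      (Equiv.subRight k).tsum_eq (fun j : ℤ => (2:ℝ) ^ (-(g * |(j:ℝ)|)))
    have tot : ∑ j ∈ S, a j ≤ 2 ^ u * (2 ^ β * K) := by
      refine (Finset.sum_le_sum key).trans ?_
      rw [← Finset.mul_sum, ← mul_assoc]
      gcongr
      rw [← ht2]
      exact hs2.sum_le_tsum _ (fun j _ => by positivity)
    refine (Real.rpow_le_rpow (Finset.sum_nonneg fun j _ => ha j) tot hp.le).trans ?_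
    rw [Real.mul_rpow (by positivity) (by positivity), ← Real.rpow_mul (by norm_num), hup]
    linarith

lemma dy_eLp {Ω : Type} [MeasurableSpace Ω] (μ : Measure Ω) (f : Ω → ℂ) (q : ℝ) (hq : 0 < q) :
    eLpNorm f (ENNReal.ofReal q) μ ^ q = ∫⁻ x, ‖f x‖ₑ ^ q ∂μ := by
  rw [eLpNorm_eq_lintegral_rpow_enorm_toReal (by simpa using hq) (by simp),
    ENNReal.toReal_ofReal hq.le, ← ENNReal.rpow_mul, one_div, inv_mul_cancel₀ hq.ne',
    ENNReal.rpow_one]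

lemma dy_enorm (z : ℂ) (q : ℝ) (hq : 0 < q) : ‖z‖ₑ ^ q = ENNReal.ofReal (‖z‖ ^ q) := by
  rw [← ofReal_norm, ENNReal.ofReal_rpow_of_nonneg (norm_nonneg _) hq.le]

lemma dy_main (p₀ p₁ p : ℝ) (h0 : 0 < p₀) (h0p : p₀ < p) (hp1 : p < p₁) :
      ∃ C : ℝ, 0 < C ∧
        ∀ (Ω : Type) [MeasurableSpace Ω], ∀ (μ : Measure Ω)
          (F : ℤ → Ω → ℂ) (s : ℤ → ℝ) (M : ℝ),
          0 < M → (∀ j, 0 ≤ s j) → (∀ j, Measurable (F j)) →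
          (Function.support F).Finite →
          (∀ j, eLpNorm (F j) (ENNReal.ofReal p₀) μ ^ p₀ ≤
              ENNReal.ofReal (2 ^ ((j : ℝ) * p₀) * M ^ p₀ * s j)) →
          (∀ j, eLpNorm (F j) (ENNReal.ofReal p₁) μ ^ p₁ ≤
              ENNReal.ofReal (2 ^ ((j : ℝ) * p₁) * M ^ p₁ * s j)) →
          eLpNorm (fun x => ∑ᶠ j, F j x) (ENNReal.ofReal p) μ ^ p ≤
            ENNReal.ofReal (C ^ p * M ^ p) *
              ∑' j : ℤ, ENNReal.ofReal (2 ^ ((j : ℝ) * p) * s j) := by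
  obtain ⟨C, hC, hpt⟩ := dy_pointwise p₀ p₁ p h0 h0p hp1
  have hp : 0 < p := by linarith
  have h1 : 0 < p₁ := by linarith
  refine ⟨C * 2 ^ (1 / p), by positivity, ?_⟩
  intro Ω _ μ F s M hM hs hF hfin H0 H1
  have hCC : (C * 2 ^ (1 / p)) ^ p = C ^ p * 2 := by
    rw [Real.mul_rpow hC.le (by positivity), ← Real.rpow_mul (by norm_num),
      one_div_mul_cancel hp.ne', Real.rpow_one]
  set S := hfin.toFinset with hS
  have hfs : ∀ x, ∑ᶠ j, F j x = ∑ j ∈ S, F j x := by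
    intro x
    apply finsum_eq_sum_of_support_subset
    intro j hj
    simp only [hS, Finite.coe_toFinset, Function.mem_support] at hj ⊢
    intro h; apply hj; rw [h]; rfl
  set c : ℝ → ℤ → ℝ := fun q j => 2 ^ ((j:ℝ) * (p - q)) * (M ^ q)⁻¹ with hc
  have hc0 : ∀ q j, 0 ≤ c q j := fun q j => by simp only [hc]; positivity
  have hx : ∀ x, ‖∑ᶠ j, F j x‖ₑ ^ p ≤ ENNReal.ofReal (C ^ p * M ^ p) *
      ∑ j ∈ S, (ENNReal.ofReal (c p₀ j) * ‖F j x‖ₑ ^ p₀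
        + ENNReal.ofReal (c p₁ j) * ‖F j x‖ₑ ^ p₁) := by
    intro x
    have hh := hpt S (fun j => ‖F j x‖ / M) (fun j => by positivity)
    have e : ∀ j, ENNReal.ofReal (c p₀ j) * ‖F j x‖ₑ ^ p₀
        + ENNReal.ofReal (c p₁ j) * ‖F j x‖ₑ ^ p₁ =
        ENNReal.ofReal (c p₀ j * ‖F j x‖ ^ p₀ + c p₁ j * ‖F j x‖ ^ p₁) := by
      intro j
      rw [dy_enorm _ _ h0, dy_enorm _ _ h1, ← ENNReal.ofReal_mul (hc0 _ _),
        ← ENNReal.ofReal_mul (hc0 _ _), ← ENNReal.ofReal_add]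
      · exact mul_nonneg (hc0 _ _) (by positivity)
      · exact mul_nonneg (hc0 _ _) (by positivity)
    simp only [e]
    rw [← ENNReal.ofReal_sum_of_nonneg, ← ENNReal.ofReal_mul (by positivity), dy_enorm _ _ hp]
    · apply ENNReal.ofReal_le_ofReal
      rw [hfs]
      have h3 : ‖∑ j ∈ S, F j x‖ ^ p ≤ (M * ∑ j ∈ S, ‖F j x‖ / M) ^ p := by
        apply Real.rpow_le_rpow (norm_nonneg _) _ hp.le
        rw [← Finset.sum_div, mul_div_cancel₀ _ hM.ne']
        exact norm_sum_le _ _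
      refine h3.trans ?_
      rw [Real.mul_rpow hM.le (Finset.sum_nonneg fun j _ => by positivity),
        mul_comm (C ^ p), mul_assoc]
      refine mul_le_mul_of_nonneg_left (hh.trans_eq ?_) (by positivity)
      congr 1
      apply Finset.sum_congr rfl
      intro j _
      simp only [hc]
      rw [Real.div_rpow (norm_nonneg _) hM.le, Real.div_rpow (norm_nonneg _) hM.le]
      ring
    · intro j _
      exact add_nonneg (mul_nonneg (hc0 _ _) (by positivity))
        (mul_nonneg (hc0 _ _) (by positivity))
  have hterm : ∀ q, 0 < q → ∀ j, eLpNorm (F j) (ENNReal.ofReal q) μ ^ q ≤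
              ENNReal.ofReal (2 ^ ((j : ℝ) * q) * M ^ q * s j) →
      ENNReal.ofReal (c q j) * ∫⁻ x, ‖F j x‖ₑ ^ q ∂μ ≤
        ENNReal.ofReal (2 ^ ((j : ℝ) * p) * s j) := by
    intro q hq j hj
    rw [← dy_eLp _ _ _ hq]
    refine (mul_le_mul_right hj _).trans_eq ?_
    rw [← ENNReal.ofReal_mul (hc0 _ _)]
    congr 1
    simp only [hc]
    have : (j:ℝ) * p = (j:ℝ) * (p - q) + (j:ℝ) * q := by ring
    rw [this, Real.rpow_add (by norm_num)]
    have : M ^ q ≠ 0 := by positivity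
    field_simp
  have hm : ∀ q j, Measurable fun x => ENNReal.ofReal (c q j) * ‖F j x‖ₑ ^ q := by
    intro q j
    exact ((hF j).enorm.pow_const q).const_mul _
  have hm2 : ∀ j, Measurable fun x => ENNReal.ofReal (c p₀ j) * ‖F j x‖ₑ ^ p₀
        + ENNReal.ofReal (c p₁ j) * ‖F j x‖ₑ ^ p₁ := fun j => (hm _ j).add (hm _ j)
  rw [dy_eLp _ _ _ hp, hCC]
  calc ∫⁻ x, ‖∑ᶠ j, F j x‖ₑ ^ p ∂μ
      ≤ ∫⁻ x, ENNReal.ofReal (C ^ p * M ^ p) *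
      ∑ j ∈ S, (ENNReal.ofReal (c p₀ j) * ‖F j x‖ₑ ^ p₀
        + ENNReal.ofReal (c p₁ j) * ‖F j x‖ₑ ^ p₁) ∂μ := lintegral_mono hx
    _ = ENNReal.ofReal (C ^ p * M ^ p) *
      ∑ j ∈ S, (ENNReal.ofReal (c p₀ j) * ∫⁻ x, ‖F j x‖ₑ ^ p₀ ∂μ
        + ENNReal.ofReal (c p₁ j) * ∫⁻ x, ‖F j x‖ₑ ^ p₁ ∂μ) := by
        rw [lintegral_const_mul' _ _ ENNReal.ofReal_ne_top,
          lintegral_finsetSum _ (fun j _ => hm2 j)]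
        congr 1
        apply Finset.sum_congr rfl
        intro j _
        rw [lintegral_add_left (hm _ j), lintegral_const_mul' _ _ ENNReal.ofReal_ne_top,
          lintegral_const_mul' _ _ ENNReal.ofReal_ne_top]
    _ ≤ ENNReal.ofReal (C ^ p * M ^ p) *
      ∑ j ∈ S, (ENNReal.ofReal (2 ^ ((j : ℝ) * p) * s j)
        + ENNReal.ofReal (2 ^ ((j : ℝ) * p) * s j)) := by
        gcongr with j _
        · exact hterm p₀ h0 j (H0 j)
        · exact hterm p₁ h1 j (H1 j)
    _ = ENNReal.ofReal (C ^ p * 2 * M ^ p) *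
      ∑ j ∈ S, ENNReal.ofReal (2 ^ ((j : ℝ) * p) * s j) := by
        simp only [← two_mul]
        rw [← Finset.mul_sum, ← mul_assoc]
        congr 1
        rw [show C ^ p * 2 * M ^ p = (C ^ p * M ^ p) * 2 by ring,
          ENNReal.ofReal_mul (p := C ^ p * M ^ p) (by positivity)]
        simp
    _ ≤ _ := by
        gcongr
        exact ENNReal.sum_le_tsum _

/-- dyadic interpolation lemma.  First conjunct: the case `0 < p₀ < p₁ < ∞`.
Second conjunct: the case `p₀ = 0`, where the hypothesis for `ν = 0` is replaced by a
bound on the measure of the support. -/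
theorem dyadic_interpolation :
    (∀ p₀ p₁ p : ℝ, 0 < p₀ → p₀ < p₁ → p₀ < p → p < p₁ →
      ∃ C : ℝ, 0 < C ∧
        ∀ (Ω : Type) [MeasurableSpace Ω], ∀ (μ : Measure Ω)
          (F : ℤ → Ω → ℂ) (s : ℤ → ℝ) (M : ℝ),
          0 < M → (∀ j, 0 ≤ s j) → (∀ j, Measurable (F j)) →
          (Function.support F).Finite →
          (∀ j, eLpNorm (F j) (ENNReal.ofReal p₀) μ ^ p₀ ≤
              ENNReal.ofReal (2 ^ ((j : ℝ) * p₀) * M ^ p₀ * s j)) →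
          (∀ j, eLpNorm (F j) (ENNReal.ofReal p₁) μ ^ p₁ ≤
              ENNReal.ofReal (2 ^ ((j : ℝ) * p₁) * M ^ p₁ * s j)) →
          eLpNorm (fun x => ∑ᶠ j, F j x) (ENNReal.ofReal p) μ ^ p ≤
            ENNReal.ofReal (C ^ p * M ^ p) *
              ∑' j : ℤ, ENNReal.ofReal (2 ^ ((j : ℝ) * p) * s j))
    ∧
    (∀ p₁ p : ℝ, 0 < p₁ → 0 < p → p < p₁ →
      ∃ C : ℝ, 0 < C ∧
        ∀ (Ω : Type) [MeasurableSpace Ω], ∀ (μ : Measure Ω)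
          (F : ℤ → Ω → ℂ) (s : ℤ → ℝ) (M : ℝ),
          0 < M → (∀ j, 0 ≤ s j) → (∀ j, Measurable (F j)) →
          (Function.support F).Finite →
          (∀ j, μ {x | F j x ≠ 0} ≤ ENNReal.ofReal (s j)) →
          (∀ j, eLpNorm (F j) (ENNReal.ofReal p₁) μ ^ p₁ ≤
              ENNReal.ofReal (2 ^ ((j : ℝ) * p₁) * M ^ p₁ * s j)) →
          eLpNorm (fun x => ∑ᶠ j, F j x) (ENNReal.ofReal p) μ ^ p ≤
            ENNReal.ofReal (C ^ p * M ^ p) *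
              ∑' j : ℤ, ENNReal.ofReal (2 ^ ((j : ℝ) * p) * s j)) := by
  refine ⟨fun p₀ p₁ p h0 _ h0p hp1 => dy_main p₀ p₁ p h0 h0p hp1, ?_⟩
  intro p₁ p h1 hp hp1
  have hq : 0 < p / 2 := by linarith
  obtain ⟨C, hC, hmain⟩ := dy_main (p / 2) p₁ p hq (by linarith) hp1
  refine ⟨C * 2 ^ (1 / p), by positivity, ?_⟩
  intro Ω _ μ F s M hM hs hF hfin H0 H1
  have hCC : (C * 2 ^ (1 / p)) ^ p = C ^ p * 2 := by
    rw [Real.mul_rpow hC.le (by positivity), ← Real.rpow_mul (by norm_num),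
      one_div_mul_cancel hp.ne', Real.rpow_one]
  have hmm := hmain Ω μ F (fun j => 2 * s j) M hM (fun j => by linarith [hs j]) hF hfin ?_ ?_
  · refine hmm.trans_eq ?_
    have e : ∀ j : ℤ, ENNReal.ofReal (2 ^ ((j : ℝ) * p) * (2 * s j)) =
        2 * ENNReal.ofReal (2 ^ ((j : ℝ) * p) * s j) := by
      intro j
      rw [show (2:ℝ) ^ ((j : ℝ) * p) * (2 * s j) = 2 * (2 ^ ((j : ℝ) * p) * s j) by ring,
        ENNReal.ofReal_mul (by norm_num)]
      simp
    simp only [e]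
    rw [ENNReal.tsum_mul_left, ← mul_assoc, hCC]
    congr 1
    rw [show C ^ p * 2 * M ^ p = (C ^ p * M ^ p) * 2 by ring,
      ENNReal.ofReal_mul (p := C ^ p * M ^ p) (by positivity)]
    simp
  · intro j
    set q := p / 2 with hqd
    rw [dy_eLp _ _ _ hq]
    have hj := H1 j
    rw [dy_eLp _ _ _ h1] at hj
    set A : ℝ := 2 ^ (j:ℝ) * M with hA
    have hA0 : 0 < A := by positivity
    have hAr : ∀ r : ℝ, (2:ℝ) ^ ((j:ℝ) * r) * M ^ r = A ^ r := by
      intro r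
      rw [hA, Real.mul_rpow (by positivity) hM.le, ← Real.rpow_mul (by norm_num)]
    rw [hAr] at hj ⊢
    have hms : MeasurableSet {x | F j x ≠ 0} := (hF j (measurableSet_singleton 0)).compl
    have hx : ∀ x, ‖F j x‖ₑ ^ q ≤ ENNReal.ofReal (A ^ q) * ({x | F j x ≠ 0}.indicator 1 x)
        + ENNReal.ofReal (A ^ (q - p₁)) * ‖F j x‖ₑ ^ p₁ := by
      intro x
      by_cases hz : F j x = 0
      · simp [hz, hq]
      · have : x ∈ {x | F j x ≠ 0} := hz
        rw [indicator_of_mem this, Pi.one_apply, mul_one, dy_enorm _ _ hq, dy_enorm _ _ h1,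
          ← ENNReal.ofReal_mul (by positivity),
          ← ENNReal.ofReal_add (by positivity) (by positivity)]
        apply ENNReal.ofReal_le_ofReal
        have hn : 0 < ‖F j x‖ := norm_pos_iff.2 hz
        rcases le_total ‖F j x‖ A with hle | hle
        · have := Real.rpow_le_rpow hn.le hle hq.le
          have : 0 ≤ A ^ (q - p₁) * ‖F j x‖ ^ p₁ := by positivity
          linarith
        · have h3 : ‖F j x‖ ^ (q - p₁) ≤ A ^ (q - p₁) :=
            Real.rpow_le_rpow_of_nonpos hA0 hle (by linarith)
          have h4 : ‖F j x‖ ^ q = ‖F j x‖ ^ (q - p₁) * ‖F j x‖ ^ p₁ := by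
            rw [← Real.rpow_add hn]; congr 1; ring
          have h5 : ‖F j x‖ ^ (q - p₁) * ‖F j x‖ ^ p₁ ≤ A ^ (q - p₁) * ‖F j x‖ ^ p₁ := by
            gcongr
          have : 0 ≤ A ^ q := by positivity
          linarith
    refine (lintegral_mono hx).trans ?_
    rw [lintegral_add_left ((measurable_one.indicator hms).const_mul _),
      lintegral_const_mul' _ _ ENNReal.ofReal_ne_top,
      lintegral_const_mul' _ _ ENNReal.ofReal_ne_top, lintegral_indicator_one hms]
    refine (add_le_add (mul_le_mul_right (H0 j) _) (mul_le_mul_right hj _)).trans_eq ?_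
    have hsj := hs j
    rw [← ENNReal.ofReal_mul (by positivity), ← ENNReal.ofReal_mul (by positivity),
      ← ENNReal.ofReal_add (by positivity) (by positivity)]
    congr 1
    rw [← mul_assoc (A ^ (q - p₁)), ← Real.rpow_add hA0, sub_add_cancel]
    ring
  · intro j
    refine (H1 j).trans (ENNReal.ofReal_le_ofReal ?_)
    have := hs j
    gcongr
    linarith
end
end

section
/- Let d ≥ 4 and 1 < p < p_d = (2d−2)/(d+1). Let ℰ be a finite subset of 𝒴 × ℛ and set ℰ_k = ℰ ∩ (𝒴 × ℛ_k). Let c : ℰ → ℂ satisfy |c(y,r)| ≤ 1 for all (y,r) ∈ ℰ. Then ‖∑_{(y,r)∈ℰ} c(y,r) F_{y,r}‖_{L^p(ℝ^d)}^p ≤ C ∑_{k≥0} 2^{k(d−1)} #ℰ_k, where C depends only on p, d and ψ. -/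
open MeasureTheory Metric Set
open scoped FourierTransform ENNReal NNReal

noncomputable section

abbrev Ed (d : ℕ) := EuclideanSpace ℝ (Fin d)

/-- Surface measure on the sphere of radius `r` centered at the origin in `ℝ^d`:
the `(d-1)`-dimensional Hausdorff measure restricted to the sphere. -/
def sphereM (d : ℕ) (r : ℝ) : Measure (Ed d) :=
  (μH[(d : ℝ) - 1]).restrict (Metric.sphere (0 : Ed d) r)

/-- `ψ₀` is admissible: radial, `C^∞`, supported in the ball of radius `1/10`, and
its Fourier transform vanishes to order `20d` at the origin. -/
def Admissible (d : ℕ) (ψ₀ : Ed d → ℂ) : Prop :=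
  ContDiff ℝ (⊤ : ℕ∞) ψ₀ ∧
  (∀ x, ψ₀ x ≠ 0 → ‖x‖ ≤ 1 / 10) ∧
  (∀ x y : Ed d, ‖x‖ = ‖y‖ → ψ₀ x = ψ₀ y) ∧
  (∀ n : ℕ, n < 20 * d → iteratedFDeriv ℝ n (𝓕 ψ₀) 0 = 0)

/-- `ψ = ψ₀ * ψ₀` (convolution). -/
def psiOf (d : ℕ) (ψ₀ : Ed d → ℂ) : Ed d → ℂ :=
  fun x => ∫ y, ψ₀ y * ψ₀ (x - y)

/-- `F_{y,r} = σ_r * ψ(· - y)`. -/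
def Fyr (d : ℕ) (ψ₀ : Ed d → ℂ) (y : Ed d) (r : ℝ) : Ed d → ℂ :=
  fun x => ∫ z, psiOf d ψ₀ (x - y - z) ∂(sphereM d r)

/-! ### The surface measure -/

lemma sphere_hausdorff_lt_top (n : ℕ) :
    (μH[(n : ℝ)] : Measure (Ed (n + 1))) (Metric.sphere (0 : Ed (n + 1)) 1) < ∞ := by
  classical
  let φ : Fin (n + 1) → ℝ → (Fin n → ℝ) → Ed (n + 1) := fun j ε t =>
    WithLp.toLp 2 (Fin.insertNth (α := fun _ => ℝ) j ε t)
  let f : Fin (n + 1) → ℝ → (Fin n → ℝ) → Ed (n + 1) := fun j ε t => ‖φ j ε t‖⁻¹ • φ j ε t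
  let Q : Set (Fin n → ℝ) := Set.Icc (fun _ => -1) (fun _ => 1)
  have hφ : ∀ j ε, ContDiff ℝ 1 (φ j ε) := by
    intro j ε
    rw [contDiff_euclidean]
    intro i
    rcases Fin.eq_self_or_eq_succAbove j i with h | ⟨k, h⟩
    · subst h
      simp only [φ, Fin.insertNth_apply_same]
      exact contDiff_const
    · subst h
      simp only [φ, Fin.insertNth_apply_succAbove]
      exact contDiff_apply ℝ ℝ k
  have hφ0 : ∀ j ε t, ε ≠ 0 → φ j ε t ≠ 0 := by
    intro j ε t hε h
    have := congrArg (fun v : Ed (n + 1) => v j) h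
    simp [φ] at this
    exact hε this
  have hf : ∀ j ε, ε ≠ 0 → ContDiff ℝ 1 (f j ε) := by
    intro j ε hε
    exact (((hφ j ε).norm ℝ (fun t => hφ0 j ε t hε)).inv (fun t => norm_ne_zero_iff.2 (hφ0 j ε t hε))).smul (hφ j ε)
  have hfin : ∀ j ε, ε ≠ 0 → (μH[(n : ℝ)] : Measure (Ed (n + 1))) (f j ε '' Q) < ∞ := by
    intro j ε hε
    have hQ : IsCompact Q := isCompact_Icc
    obtain ⟨K, hK⟩ := ((hf j ε hε).locallyLipschitz.locallyLipschitzOn (s := Q)).exists_lipschitzOnWith_of_compact hQ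
    refine (hK.hausdorffMeasure_image_le (d := (n : ℝ)) (by positivity)).trans_lt ?_
    have h1 : (μH[(n : ℝ)] : Measure (Fin n → ℝ)) = volume := by
      have := hausdorffMeasure_pi_real (ι := Fin n)
      simpa using this
    rw [h1]
    refine ENNReal.mul_lt_top ?_ hQ.measure_lt_top
    exact ENNReal.rpow_lt_top_of_nonneg (by positivity) (by simp)
  have hcov : Metric.sphere (0 : Ed (n + 1)) 1 ⊆
      ⋃ j : Fin (n + 1), (f j 1 '' Q ∪ f j (-1) '' Q) := by
    intro z hz
    have hz1 : ‖z‖ = 1 := by simpa using hz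
    obtain ⟨j, -, hj⟩ := Finset.exists_max_image (Finset.univ : Finset (Fin (n + 1)))
      (fun i => |z i|) ⟨0, Finset.mem_univ _⟩
    have hzj : z j ≠ 0 := by
      intro h0
      have : z = 0 := by
        ext i
        have := hj i (Finset.mem_univ _)
        rw [h0, abs_zero] at this
        simpa using abs_nonpos_iff.1 this
      rw [this] at hz1
      simp at hz1
    have key : ∀ ε : ℝ, |ε| = 1 → ε * |z j| = z j → z ∈ f j ε '' Q := by
      intro ε hε hεz
      have hpos : 0 < |z j| := abs_pos.2 hzj
      refine ⟨fun k => z (j.succAbove k) / |z j|, ?_, ?_⟩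
      · constructor <;> intro k
        · have := hj (j.succAbove k) (Finset.mem_univ _)
          have h2 := neg_abs_le (z (j.succAbove k))
          change -1 ≤ z (j.succAbove k) / |z j|
          rw [le_div_iff₀ hpos]
          simp only at this
          linarith
        · have := hj (j.succAbove k) (Finset.mem_univ _)
          have h2 := le_abs_self (z (j.succAbove k))
          change z (j.succAbove k) / |z j| ≤ 1
          rw [div_le_iff₀ hpos]
          simp only at this
          linarith
      · have hφz : φ j ε (fun k => z (j.succAbove k) / |z j|) = |z j|⁻¹ • z := by
          ext i
          rcases Fin.eq_self_or_eq_succAbove j i with h | ⟨k, h⟩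
          · subst h
            simp only [φ, Fin.insertNth_apply_same, PiLp.smul_apply, smul_eq_mul]
            field_simp
            linarith
          · subst h
            simp only [φ, Fin.insertNth_apply_succAbove, PiLp.smul_apply, smul_eq_mul]
            field_simp
        simp only [f, hφz, norm_smul, hz1]
        simp [smul_smul, hpos.ne']
    rw [Set.mem_iUnion]
    refine ⟨j, ?_⟩
    rcases lt_or_gt_of_ne hzj with h | h
    · right
      refine key (-1) (by simp) ?_
      rw [abs_of_neg h]; ring
    · left
      refine key 1 (by simp) ?_
      rw [abs_of_pos h]; ring
  refine (measure_mono hcov).trans_lt ?_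
  refine (measure_iUnion_fintype_le _ _).trans_lt ?_
  rw [ENNReal.sum_lt_top]
  intro j _
  refine (measure_union_le _ _).trans_lt ?_
  exact ENNReal.add_lt_top.2 ⟨hfin j 1 (by simp), hfin j (-1) (by simp)⟩

instance sphereM_one_finite (d : ℕ) [NeZero d] : IsFiniteMeasure (sphereM d 1) := by
  obtain ⟨n, rfl⟩ : ∃ n, d = n + 1 := ⟨d - 1, by have := NeZero.ne d; omega⟩
  constructor
  rw [sphereM, Measure.restrict_apply_univ]
  have := sphere_hausdorff_lt_top n
  simpa using this

lemma sphereM_map_isometry (d : ℕ) (r : ℝ) (A : Ed d ≃ₗᵢ[ℝ] Ed d) :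
    (sphereM d r).map A = sphereM d r := by
  have h : (A : Ed d → Ed d) ⁻¹' (Metric.sphere 0 r) = Metric.sphere 0 r := by
    ext x; simp
  have h2 := A.toIsometryEquiv.measurePreserving_hausdorffMeasure ((d : ℝ) - 1)
  have h3 := h2.restrict_preimage (s := Metric.sphere (0 : Ed d) r) Metric.isClosed_sphere.measurableSet
  have h4 := h3.map_eq
  have h5 : (A.toIsometryEquiv : Ed d → Ed d) = A := rfl
  rw [h5, h] at h4
  exact h4

open scoped Pointwise in
lemma sphereM_scale (d : ℕ) [NeZero d] (r : ℝ) (hr : 0 < r) :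
    sphereM d r = ENNReal.ofReal (r ^ (d - 1)) • (sphereM d 1).map (fun z => r • z) := by
  have hd1 : (1 : ℝ) ≤ d := by exact_mod_cast Nat.one_le_iff_ne_zero.2 (NeZero.ne d)
  have hd0 : (0 : ℝ) ≤ (d : ℝ) - 1 := by linarith
  ext s hs
  have hm : Measurable (fun z : Ed d => r • z) := by fun_prop
  rw [Measure.smul_apply, Measure.map_apply hm hs, sphereM, sphereM, Measure.restrict_apply hs,
    Measure.restrict_apply (hm hs), smul_eq_mul]
  have : s ∩ Metric.sphere 0 r = (r • (((fun z : Ed d => r • z) ⁻¹' s) ∩ Metric.sphere 0 1) : Set (Ed d)) := by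
    ext x
    rw [Set.mem_smul_set_iff_inv_smul_mem₀ hr.ne']
    simp [hr.ne', norm_smul, abs_of_pos hr]
    intro _
    rw [inv_mul_eq_one₀ hr.ne', eq_comm]
  rw [this, Measure.hausdorffMeasure_smul₀ hd0 hr.ne', ENNReal.smul_def, smul_eq_mul]
  congr 1
  rw [← Real.rpow_natCast, ENNReal.ofReal, Nat.cast_sub (by exact_mod_cast hd1), Nat.cast_one,
    Real.toNNReal_rpow_of_nonneg hr.le]
  congr 2
  ext
  simp [hr.le]

instance sphereM_finite (d : ℕ) [NeZero d] (r : ℝ) [Fact (0 < r)] : IsFiniteMeasure (sphereM d r) := by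
  have hr : 0 < r := Fact.out
  rw [sphereM_scale d r hr]
  have : IsFiniteMeasure ((sphereM d 1).map (fun z => r • z)) := by infer_instance
  constructor
  rw [Measure.smul_apply, smul_eq_mul]
  exact ENNReal.mul_lt_top (by simp) (measure_lt_top _ _)

lemma sphereM_ae (d : ℕ) (r : ℝ) : ∀ᵐ z ∂(sphereM d r), ‖z‖ = r := by
  have := ae_restrict_mem (μ := (μH[(d : ℝ) - 1] : Measure (Ed d)))
    (Metric.isClosed_sphere (x := (0 : Ed d)) (ε := r)).measurableSet
  filter_upwards [this] with z hz
  simpa using hz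

/-! ### Decay of the Fourier transform of the surface measure through an ODE -/

lemma ode_decay (m : ℕ) (g h : ℝ → ℝ)
    (hg : ∀ s, 0 < s → HasDerivAt g (h s) s)
    (hh : ∀ s, 0 < s → HasDerivAt h (-g s - (m + 2) / s * h s) s) :
    ∃ C : ℝ, ∀ s, (m + 2 : ℝ) ≤ s → s ^ (m + 2) * g s ^ 2 ≤ C := by
  set a : ℝ := (m : ℝ) + 2 with ha
  have ha0 : 0 < a := by positivity
  let H : ℝ → ℝ := fun s => s ^ (m + 2) * (g s ^ 2 + h s ^ 2) + a * s ^ (m + 1) * (g s * h s)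
  have hH : ∀ s, 0 < s → HasDerivAt H (-a * s ^ m * (g s * h s)) s := by
    intro s hs
    have h1 := (hasDerivAt_pow (m + 2) s).mul (((hg s hs).pow 2).add ((hh s hs).pow 2))
    have h2 := ((hasDerivAt_pow (m + 1) s).const_mul a).mul ((hg s hs).mul (hh s hs))
    refine (h1.add h2).congr_deriv ?_
    simp only [Pi.add_apply, Pi.mul_apply, Pi.pow_apply]
    push_cast
    rw [ha]
    field_simp
    ring
  have hlow : ∀ s, a ≤ s → s ^ (m + 2) * (g s ^ 2 + h s ^ 2) ≤ 2 * H s := by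
    intro s hs
    have hs0 : 0 < s := ha0.trans_le hs
    have h1 : 0 ≤ g s ^ 2 + h s ^ 2 + 2 * (g s * h s) := by nlinarith [sq_nonneg (g s + h s)]
    have h3 : 0 ≤ s ^ (m + 1) := by positivity
    have h4 : 0 ≤ a * s ^ (m + 1) * (g s ^ 2 + h s ^ 2 + 2 * (g s * h s)) := by positivity
    have h5 : a * s ^ (m + 1) * (g s ^ 2 + h s ^ 2) ≤ s * s ^ (m + 1) * (g s ^ 2 + h s ^ 2) := by
      gcongr
    have h6 : s * s ^ (m + 1) = s ^ (m + 2) := by ring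
    rw [h6] at h5
    simp only [H]
    nlinarith
  let K : ℝ → ℝ := fun s => H s * Real.exp (a / s)
  have hK : ∀ s, 0 < s → HasDerivAt K
      ((-a * s ^ m * (g s * h s)) * Real.exp (a / s) + H s * (Real.exp (a / s) * (-a / s ^ 2))) s := by
    intro s hs
    have h1 : HasDerivAt (fun s : ℝ => a / s) (-a / s ^ 2) s := by
      have := (hasDerivAt_inv hs.ne').const_mul a
      refine (this.congr_deriv ?_).congr_of_eventuallyEq ?_
      · field_simp
      · exact Filter.Eventually.of_forall (fun x => by simp [div_eq_mul_inv])
    exact (hH s hs).mul h1.exp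
  have hanti : AntitoneOn K (Set.Ici a) := by
    apply antitoneOn_of_deriv_nonpos (convex_Ici a)
    · intro s hs
      exact (hK s (ha0.trans_le hs)).continuousAt.continuousWithinAt
    · intro s hs
      rw [interior_Ici] at hs
      exact (hK s (ha0.trans hs)).differentiableAt.differentiableWithinAt
    · intro s hs
      rw [interior_Ici] at hs
      have hs0 : 0 < s := ha0.trans hs
      rw [(hK s hs0).deriv]
      have h1 := hlow s (le_of_lt hs)
      have h2 : -(g s * h s) ≤ (g s ^ 2 + h s ^ 2) / 2 := by nlinarith [sq_nonneg (g s + h s)]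
      have h3 : a * s ^ m * (-(g s * h s)) ≤ a * s ^ m * ((g s ^ 2 + h s ^ 2) / 2) := by gcongr
      have h4 : a * s ^ m * ((g s ^ 2 + h s ^ 2) / 2) = a / s ^ 2 * (s ^ (m + 2) * (g s ^ 2 + h s ^ 2)) / 2 := by
        field_simp
        ring
      have h5 : a / s ^ 2 * (s ^ (m + 2) * (g s ^ 2 + h s ^ 2)) ≤ a / s ^ 2 * (2 * H s) := by gcongr
      have h6 : -a * s ^ m * (g s * h s) + H s * (-a / s ^ 2) ≤ 0 := by
        have : H s * (-a / s ^ 2) = -(a / s ^ 2 * (2 * H s)) / 2 := by ring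
        rw [this]
        nlinarith
      have : -a * s ^ m * (g s * h s) * Real.exp (a / s) + H s * (Real.exp (a / s) * (-a / s ^ 2))
        = (-a * s ^ m * (g s * h s) + H s * (-a / s ^ 2)) * Real.exp (a / s) := by ring
      rw [this]
      exact mul_nonpos_of_nonpos_of_nonneg h6 (Real.exp_pos _).le
  refine ⟨2 * K a, fun s hs => ?_⟩
  have hs0 : 0 < s := ha0.trans_le hs
  have h1 := hlow s hs
  have h2 : K s ≤ K a := hanti (Set.mem_Ici.2 le_rfl) hs hs
  have hHs : 0 ≤ H s := by
    have : 0 ≤ s ^ (m + 2) * (g s ^ 2 + h s ^ 2) := by positivity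
    linarith
  have h3 : H s ≤ K s := by
    have : 1 ≤ Real.exp (a / s) := Real.one_le_exp (by positivity)
    calc H s = H s * 1 := by ring
      _ ≤ _ := by simp only [K]; gcongr
  have h4 : 0 ≤ s ^ (m + 2) * h s ^ 2 := by positivity
  nlinarith

/-- cosine transform of the surface measure in the first direction -/
def besB (d : ℕ) [NeZero d] (s : ℝ) : ℝ := ∫ z, Real.cos (s * z 0) ∂(sphereM d 1)
def besB1 (d : ℕ) [NeZero d] (s : ℝ) : ℝ := ∫ z, z 0 * Real.sin (s * z 0) ∂(sphereM d 1)
def besB2 (d : ℕ) [NeZero d] (s : ℝ) : ℝ := ∫ z, (z 0) ^ 2 * Real.cos (s * z 0) ∂(sphereM d 1)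

lemma abs_coord_le {d : ℕ} (z : Ed d) (i : Fin d) : |z i| ≤ ‖z‖ := by
  simpa using PiLp.norm_apply_le z i

lemma integrable_sphere {d : ℕ} [NeZero d] {f : Ed d → ℝ} (hf : Continuous f) :
    Integrable f (sphereM d 1) := by
  obtain ⟨C, hC⟩ := (isCompact_sphere (0 : Ed d) 1).exists_bound_of_continuousOn hf.continuousOn
  refine Integrable.of_bound hf.aestronglyMeasurable C ?_
  filter_upwards [sphereM_ae d 1] with z hz
  exact hC z (by simpa using hz)

lemma integral_sphere_isometry {d : ℕ} (r : ℝ) (A : Ed d ≃ₗᵢ[ℝ] Ed d) {G : Type*} [NormedAddCommGroup G]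
    [NormedSpace ℝ G] (f : Ed d → G) :
    ∫ z, f (A z) ∂(sphereM d r) = ∫ z, f z ∂(sphereM d r) := by
  have h : MeasurePreserving A (sphereM d r) (sphereM d r) :=
    ⟨A.continuous.measurable, sphereM_map_isometry d r A⟩
  exact h.integral_comp A.toHomeomorph.measurableEmbedding f

lemma hasDerivAt_sphere_integral {d : ℕ} [NeZero d] (f f' : ℝ → Ed d → ℝ) (s : ℝ) (C : ℝ)
    (hf : ∀ t, Continuous (f t)) (hf' : ∀ t, Continuous (f' t))
    (hb : ∀ t z, ‖z‖ = 1 → |t - s| < 1 → |f' t z| ≤ C)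
    (hd : ∀ t z, HasDerivAt (fun t => f t z) (f' t z) t) :
    HasDerivAt (fun t => ∫ z, f t z ∂(sphereM d 1)) (∫ z, f' s z ∂(sphereM d 1)) s := by
  refine (hasDerivAt_integral_of_dominated_loc_of_deriv_le (μ := sphereM d 1)
    (s := Metric.ball s 1) (bound := fun _ => C) (F := f) (F' := f') (Metric.ball_mem_nhds s one_pos)
    ?_ (integrable_sphere (hf s)) (hf' s).aestronglyMeasurable ?_ (integrable_const C) ?_).2
  · exact Filter.Eventually.of_forall (fun t => (hf t).aestronglyMeasurable)
  · filter_upwards [sphereM_ae d 1] with z hz t ht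
    exact hb t z hz (by simpa [Real.dist_eq] using ht)
  · exact Filter.Eventually.of_forall (fun z t _ => hd t z)

lemma besB_hasDerivAt (d : ℕ) [NeZero d] (s : ℝ) : HasDerivAt (besB d) (-besB1 d s) s := by
  have := hasDerivAt_sphere_integral (d := d) (fun t z => Real.cos (t * z 0))
    (fun t z => -(z 0 * Real.sin (t * z 0))) s 1 (by intro t; fun_prop) (by intro t; fun_prop) ?_ ?_
  · rw [integral_neg] at this
    exact this
  · intro t z hz _
    rw [abs_neg, abs_mul]
    have h1 := abs_coord_le z 0
    have h2 := Real.abs_sin_le_one (t * z 0)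
    rw [hz] at h1
    calc |z 0| * |Real.sin (t * z 0)| ≤ 1 * 1 := by gcongr
      _ = 1 := by ring
  · intro t z
    refine ((hasDerivAt_id t).mul_const (z 0)).cos.congr_deriv ?_
    simp; ring

lemma besB1_hasDerivAt (d : ℕ) [NeZero d] (s : ℝ) : HasDerivAt (besB1 d) (besB2 d s) s := by
  refine hasDerivAt_sphere_integral (d := d) (fun t z => z 0 * Real.sin (t * z 0))
    (fun t z => (z 0) ^ 2 * Real.cos (t * z 0)) s 1 (by intro t; fun_prop) (by intro t; fun_prop) ?_ ?_
  · intro t z hz _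
    rw [abs_mul]
    have h1 := abs_coord_le z 0
    have h2 := Real.abs_cos_le_one (t * z 0)
    rw [hz] at h1
    rw [abs_pow]
    calc |z 0| ^ 2 * |Real.cos (t * z 0)| ≤ 1 ^ 2 * 1 := by gcongr
      _ = 1 := by ring
  · intro t z
    refine (((hasDerivAt_id t).mul_const (z 0)).sin.const_mul (z 0)).congr_deriv ?_
    simp; ring

/-- A reflection in the `(0,j)` plane. -/
lemma exists_plane_reflection (d : ℕ) [NeZero d] (j : Fin d) (hj : j ≠ 0) (θ : ℝ) :
    ∃ A : Ed d ≃ₗᵢ[ℝ] Ed d, ∀ z, A z 0 = z 0 * Real.cos θ + z j * Real.sin θ ∧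
      A z j = z 0 * Real.sin θ - z j * Real.cos θ := by
  let v : Ed d := EuclideanSpace.single 0 (Real.sin (θ / 2)) - EuclideanSpace.single j (Real.cos (θ / 2))
  have hsc := Real.sin_sq_add_cos_sq (θ / 2)
  have hs : Real.sin θ = 2 * Real.sin (θ / 2) * Real.cos (θ / 2) := by
    rw [← Real.sin_two_mul]; congr 1; ring
  have hc : Real.cos θ = 2 * Real.cos (θ / 2) ^ 2 - 1 := by
    rw [← Real.cos_two_mul]; congr 1; ring
  have hv0 : v 0 = Real.sin (θ / 2) := by simp [v, hj.symm]
  have hvj : v j = -Real.cos (θ / 2) := by simp [v, hj]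
  have hin : ∀ z : Ed d, inner ℝ v z = Real.sin (θ / 2) * z 0 - Real.cos (θ / 2) * z j := by
    intro z
    simp [v, inner_sub_left, EuclideanSpace.inner_single_left]
  have hnv : ‖v‖ ^ 2 = 1 := by
    rw [← real_inner_self_eq_norm_sq, hin, hv0, hvj]; nlinarith
  have hnv1 : ‖v‖ = 1 := by
    have := norm_nonneg v
    nlinarith
  refine ⟨Submodule.reflection (ℝ ∙ v)ᗮ, fun z => ?_⟩
  rw [Submodule.reflection_orthogonal_apply, Submodule.reflection_singleton_apply]
  simp only [PiLp.neg_apply, PiLp.sub_apply, PiLp.smul_apply, hv0, hvj, hin, hnv1]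
  simp
  rw [hs, hc]
  constructor
  · linear_combination (-2 * z 0) * hsc
  · ring

lemma bes_ident (d : ℕ) [NeZero d] (j : Fin d) (hj : j ≠ 0) (s : ℝ) :
    besB1 d s = s * ∫ z, (z j) ^ 2 * Real.cos (s * z 0) ∂(sphereM d 1) := by
  let f : ℝ → Ed d → ℝ := fun θ z => (z 0 * Real.sin θ - z j * Real.cos θ) *
    Real.sin (s * (z 0 * Real.cos θ + z j * Real.sin θ))
  let f' : ℝ → Ed d → ℝ := fun θ z => (z 0 * Real.cos θ + z j * Real.sin θ) *
    Real.sin (s * (z 0 * Real.cos θ + z j * Real.sin θ)) +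
    (z 0 * Real.sin θ - z j * Real.cos θ) *
    (Real.cos (s * (z 0 * Real.cos θ + z j * Real.sin θ)) * (s * (z j * Real.cos θ - z 0 * Real.sin θ)))
  have hder : HasDerivAt (fun t => ∫ z, f t z ∂(sphereM d 1)) (∫ z, f' 0 z ∂(sphereM d 1)) 0 := by
    refine hasDerivAt_sphere_integral f f' 0 (2 + 2 * (|s| * 2)) ?_ ?_ ?_ ?_
    · intro t; fun_prop
    · intro t; fun_prop
    · intro t z hz _
      have h1 := abs_coord_le z 0
      have h2 := abs_coord_le z j
      rw [hz] at h1 h2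
      have hlin : ∀ a b : ℝ, |a| ≤ 1 → |b| ≤ 1 → |z 0 * a + z j * b| ≤ 2 := by
        intro a b ha hb
        calc _ ≤ |z 0 * a| + |z j * b| := abs_add_le _ _
          _ ≤ 1 * 1 + 1 * 1 := by rw [abs_mul, abs_mul]; gcongr
          _ = 2 := by norm_num
      have e1 := hlin _ _ (Real.abs_cos_le_one t) (Real.abs_sin_le_one t)
      have e2 : |z 0 * Real.sin t - z j * Real.cos t| ≤ 2 := by
        have := hlin (Real.sin t) (-Real.cos t) (Real.abs_sin_le_one t) (by simpa using Real.abs_cos_le_one t)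
        rwa [mul_neg, ← sub_eq_add_neg] at this
      have e3 : |z j * Real.cos t - z 0 * Real.sin t| ≤ 2 := by rwa [abs_sub_comm]
      refine (abs_add_le _ _).trans ?_
      rw [abs_mul, abs_mul, abs_mul, abs_mul]
      calc _ ≤ 2 * 1 + 2 * (1 * (|s| * 2)) := by
            gcongr
            · exact Real.abs_sin_le_one _
            · exact Real.abs_cos_le_one _
        _ = _ := by ring
    · intro t z
      have h1 : HasDerivAt (fun θ => z 0 * Real.sin θ - z j * Real.cos θ)
          (z 0 * Real.cos t + z j * Real.sin t) t :=
        (((Real.hasDerivAt_sin t).const_mul (z 0)).sub ((Real.hasDerivAt_cos t).const_mul (z j))).congr_deriv (by ring)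
      have h2 : HasDerivAt (fun θ => s * (z 0 * Real.cos θ + z j * Real.sin θ))
          (s * (z j * Real.cos t - z 0 * Real.sin t)) t :=
        ((((Real.hasDerivAt_cos t).const_mul (z 0)).add ((Real.hasDerivAt_sin t).const_mul (z j))).const_mul s).congr_deriv (by ring)
      exact h1.mul h2.sin
  have hconst : (fun t => ∫ z, f t z ∂(sphereM d 1)) = fun _ => ∫ z, z j * Real.sin (s * z 0) ∂(sphereM d 1) := by
    funext t
    obtain ⟨A, hA⟩ := exists_plane_reflection d j hj t
    rw [← integral_sphere_isometry 1 A (fun z => z j * Real.sin (s * z 0))]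
    simp only [f, (hA _).1, (hA _).2]
  rw [hconst] at hder
  have h0 := hder.unique (hasDerivAt_const _ _)
  have h1 : ∫ z, f' 0 z ∂(sphereM d 1) = ∫ z, (z 0 * Real.sin (s * z 0) - s * ((z j) ^ 2 * Real.cos (s * z 0))) ∂(sphereM d 1) := by
    congr 1; funext z; simp [f']; ring
  rw [h1, integral_sub (integrable_sphere (by fun_prop)) (integrable_sphere (by fun_prop)),
    integral_const_mul] at h0
  unfold besB1
  linarith

lemma bes_ode (d : ℕ) [NeZero d] (s : ℝ) :
    ((d : ℝ) - 1) * besB1 d s = s * (besB d s - besB2 d s) := by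
  have h1 : ∑ j ∈ (Finset.univ.erase (0 : Fin d)), besB1 d s =
      ∑ j ∈ (Finset.univ.erase (0 : Fin d)), s * ∫ z, (z j) ^ 2 * Real.cos (s * z 0) ∂(sphereM d 1) :=
    Finset.sum_congr rfl (fun j hj => bes_ident d j (Finset.ne_of_mem_erase hj) s)
  have hd1 : 1 ≤ d := Nat.one_le_iff_ne_zero.2 (NeZero.ne d)
  rw [Finset.sum_const, Finset.card_erase_of_mem (Finset.mem_univ _), Finset.card_univ, Fintype.card_fin,
    nsmul_eq_mul, Nat.cast_sub hd1, Nat.cast_one, ← Finset.mul_sum,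
    ← integral_finsetSum _ (fun j _ => integrable_sphere (by fun_prop))] at h1
  rw [h1]
  congr 1
  unfold besB besB2
  rw [← integral_sub (integrable_sphere (by fun_prop)) (integrable_sphere (by fun_prop))]
  apply integral_congr_ae
  filter_upwards [sphereM_ae d 1] with z hz
  have h2 : ∑ j, (z j) ^ 2 = 1 := by
    have := EuclideanSpace.real_norm_sq_eq z
    rw [hz] at this
    linarith
  rw [← Finset.add_sum_erase _ _ (Finset.mem_univ (0 : Fin d))] at h2
  rw [← Finset.sum_mul, show ∑ j ∈ (Finset.univ.erase (0 : Fin d)), (z j) ^ 2 = 1 - (z 0) ^ 2 by linarith]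
  ring

lemma besB_abs_le (d : ℕ) [NeZero d] (s : ℝ) : |besB d s| ≤ (sphereM d 1).real Set.univ := by
  have := norm_integral_le_of_norm_le_const (μ := sphereM d 1) (f := fun z => Real.cos (s * z 0)) (C := 1)
    (Filter.Eventually.of_forall (fun z => Real.abs_cos_le_one _))
  simpa [besB] using this

lemma besB_decay (d : ℕ) [NeZero d] (hd : 3 ≤ d) :
    ∃ C : ℝ, 0 < C ∧ ∀ s, 0 < s → |besB d s| ≤ C * s ^ (-(((d : ℝ) - 1) / 2)) := by
  obtain ⟨m, rfl⟩ : ∃ m, d = m + 3 := ⟨d - 3, by omega⟩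
  obtain ⟨C, hC⟩ := ode_decay m (besB (m + 3)) (fun s => -besB1 (m + 3) s)
    (fun s _ => besB_hasDerivAt _ s) (by
      intro s hs
      refine (besB1_hasDerivAt (m + 3) s).neg.congr_deriv ?_
      have := bes_ode (m + 3) s
      push_cast at this
      field_simp
      linarith)
  set M := (sphereM (m + 3) 1).real Set.univ
  have hM : 0 ≤ M := measureReal_nonneg
  set a : ℝ := ((((m + 3 : ℕ) : ℝ)) - 1) / 2 with ha
  have ha' : a = (m + 2 : ℝ) / 2 := by rw [ha]; push_cast; ring
  have ha0 : 0 < a := by rw [ha']; positivity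
  refine ⟨Real.sqrt |C| + M * (m + 2 : ℝ) ^ a + 1, by positivity, fun s hs => ?_⟩
  rw [Real.rpow_neg hs.le, ← div_eq_mul_inv, le_div_iff₀ (by positivity)]
  rcases le_or_gt (m + 2 : ℝ) s with h | h
  · have h1 := hC s h
    have h2 : (|besB (m + 3) s| * s ^ a) ^ 2 ≤ |C| := by
      rw [mul_pow, sq_abs, ← Real.rpow_natCast (s ^ a), ← Real.rpow_mul hs.le]
      have : a * ((2 : ℕ) : ℝ) = ((m + 2 : ℕ) : ℝ) := by rw [ha']; push_cast; ring
      rw [this, Real.rpow_natCast, mul_comm]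
      exact h1.trans (le_abs_self C)
    have h3 := Real.le_sqrt_of_sq_le h2
    have : 0 ≤ M * (m + 2 : ℝ) ^ a := by positivity
    linarith
  · have h1 := besB_abs_le (m + 3) s
    have h2 : s ^ a ≤ (m + 2 : ℝ) ^ a := Real.rpow_le_rpow hs.le h.le ha0.le
    have h3 : |besB (m + 3) s| * s ^ a ≤ M * (m + 2 : ℝ) ^ a := by gcongr
    have := Real.sqrt_nonneg |C|
    linarith


/-! ### Fourier transform of the surface measure -/

def sig (d : ℕ) (r : ℝ) (ξ : Ed d) : ℂ := ∫ z, (𝐞 (-(inner ℝ z ξ)) : ℂ) ∂(sphereM d r)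

lemma sig_isometry (d : ℕ) (r : ℝ) (A : Ed d ≃ₗᵢ[ℝ] Ed d) (ξ : Ed d) :
    sig d r (A ξ) = sig d r ξ := by
  unfold sig
  rw [← integral_sphere_isometry r A]
  simp only [LinearIsometryEquiv.inner_map_map]

lemma exists_isometry_of_norm_eq {d : ℕ} (v w : Ed d) (h : ‖v‖ = ‖w‖) :
    ∃ A : Ed d ≃ₗᵢ[ℝ] Ed d, A v = w :=
  ⟨Submodule.reflection (ℝ ∙ (v - w))ᗮ, Submodule.reflection_sub h⟩

lemma sig_radial (d : ℕ) (r : ℝ) (ξ η : Ed d) (h : ‖ξ‖ = ‖η‖) : sig d r ξ = sig d r η := by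
  obtain ⟨A, rfl⟩ := exists_isometry_of_norm_eq ξ η h
  rw [sig_isometry]

lemma sig_eq_besB (d : ℕ) [NeZero d] (r : ℝ) (hr : 0 < r) (ξ : Ed d) :
    sig d r ξ = ((r ^ (d - 1) * besB d (2 * Real.pi * r * ‖ξ‖) : ℝ) : ℂ) := by
  have h0 : sig d r ξ = sig d r (EuclideanSpace.single (0 : Fin d) ‖ξ‖) := by
    apply sig_radial; simp
  rw [h0]
  unfold sig
  have hc : Continuous fun z : Ed d => (𝐞 (-(inner ℝ z (EuclideanSpace.single (0 : Fin d) ‖ξ‖))) : ℂ) := by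
    fun_prop
  rw [sphereM_scale d r hr, integral_smul_measure,
    integral_map (by fun_prop) (hc.aestronglyMeasurable)]
  have key : ∀ z : Ed d, (𝐞 (-(inner ℝ (r • z) (EuclideanSpace.single (0 : Fin d) ‖ξ‖))) : ℂ)
      = ((Real.cos ((2 * Real.pi * r * ‖ξ‖) * z 0) : ℝ) : ℂ)
        - ((Real.sin ((2 * Real.pi * r * ‖ξ‖) * z 0) : ℝ) : ℂ) * Complex.I := by
    intro z
    rw [Real.fourierChar_apply, inner_smul_left, EuclideanSpace.inner_single_right]
    have : ((2 * Real.pi * (-((starRingEnd ℝ) r * (‖ξ‖ * (starRingEnd ℝ) (z 0)))) : ℝ) : ℂ) * Complex.I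
      = ((-((2 * Real.pi * r * ‖ξ‖) * z 0) : ℝ) : ℂ) * Complex.I := by
      simp only [conj_trivial]; congr 2; ring
    rw [this, Complex.exp_mul_I, ← Complex.ofReal_cos, ← Complex.ofReal_sin, Real.cos_neg, Real.sin_neg]
    push_cast; ring
  simp_rw [key]
  have hsin : ∫ z, Real.sin ((2 * Real.pi * r * ‖ξ‖) * z 0) ∂(sphereM d 1) = 0 := by
    have := integral_sphere_isometry (d := d) 1 (LinearIsometryEquiv.neg ℝ)
      (fun z => Real.sin ((2 * Real.pi * r * ‖ξ‖) * z 0))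
    simp only [LinearIsometryEquiv.coe_neg, PiLp.neg_apply, mul_neg, Real.sin_neg, integral_neg] at this
    linarith
  rw [integral_sub, integral_mul_const, integral_complex_ofReal, integral_complex_ofReal, hsin]
  · unfold besB
    rw [ENNReal.toReal_ofReal (by positivity)]
    simp [Complex.ofReal_mul]
  · exact (integrable_sphere (f := fun z => Real.cos ((2 * Real.pi * r * ‖ξ‖) * z 0)) (by fun_prop)).ofReal
  · exact (integrable_sphere (f := fun z => Real.sin ((2 * Real.pi * r * ‖ξ‖) * z 0)) (by fun_prop)).ofReal.mul_const _

lemma sig_decay (d : ℕ) [NeZero d] (hd : 3 ≤ d) :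
    ∃ C, 0 < C ∧ ∀ r, 0 < r → ∀ ξ : Ed d,
      ‖sig d r ξ‖ * ‖ξ‖ ^ (((d : ℝ) - 1) / 2) ≤ C * r ^ (((d : ℝ) - 1) / 2) := by
  obtain ⟨C, hC, hb⟩ := besB_decay d hd
  have hd' : (3 : ℝ) ≤ d := by exact_mod_cast hd
  have ha : 0 < ((d : ℝ) - 1) / 2 := by linarith
  set a := ((d : ℝ) - 1) / 2 with had
  refine ⟨C * (2 * Real.pi) ^ (-a), by positivity, fun r hr ξ => ?_⟩
  rcases eq_or_ne ξ 0 with rfl | hξ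
  · rw [norm_zero, Real.zero_rpow ha.ne', mul_zero]; positivity
  have hn : 0 < ‖ξ‖ := norm_pos_iff.2 hξ
  rw [sig_eq_besB d r hr, Complex.norm_real, Real.norm_eq_abs, abs_mul, abs_of_pos (by positivity : 0 < r ^ (d - 1))]
  have h1 := hb (2 * Real.pi * r * ‖ξ‖) (by positivity)
  have e1 : (r : ℝ) ^ (d - 1) = r ^ a * r ^ a := by
    rw [← Real.rpow_add hr, ← Real.rpow_natCast]
    congr 1
    rw [Nat.cast_sub (by omega)]; simp [had]
  have e2 : (2 * Real.pi * r * ‖ξ‖) ^ (-a) = (2 * Real.pi) ^ (-a) * (r ^ a)⁻¹ * (‖ξ‖ ^ a)⁻¹ := by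
    rw [Real.mul_rpow (by positivity) hn.le, Real.mul_rpow (by positivity) hr.le,
      Real.rpow_neg hr.le, Real.rpow_neg hn.le]
  rw [e2] at h1
  have hra : 0 < r ^ a := by positivity
  have hxa : 0 < ‖ξ‖ ^ a := by positivity
  calc r ^ (d - 1) * |besB d (2 * Real.pi * r * ‖ξ‖)| * ‖ξ‖ ^ a
      ≤ r ^ (d - 1) * (C * ((2 * Real.pi) ^ (-a) * (r ^ a)⁻¹ * (‖ξ‖ ^ a)⁻¹)) * ‖ξ‖ ^ a := by gcongr
    _ = _ := by rw [e1]; field_simp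

/-- Taylor estimate at a zero of high order. -/
lemma taylor_zero {V : Type} [NormedAddCommGroup V] [NormedSpace ℝ V] [ProperSpace V] (N : ℕ) :
    ∀ {F : Type} [NormedAddCommGroup F] [NormedSpace ℝ F] (f : V → F), ContDiff ℝ (⊤ : ℕ∞) f →
      (∀ n < N, iteratedFDeriv ℝ n f 0 = 0) → ∃ C, 0 ≤ C ∧ ∀ x : V, ‖x‖ ≤ 1 → ‖f x‖ ≤ C * ‖x‖ ^ N := by
  induction N with
  | zero =>
    intro F _ _ f hf _
    obtain ⟨C, hC⟩ := (isCompact_closedBall (0 : V) 1).exists_bound_of_continuousOn hf.continuous.continuousOn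
    refine ⟨|C|, abs_nonneg _, fun x hx => ?_⟩
    have := hC x (by simpa using hx)
    simpa using this.trans (le_abs_self C)
  | succ N ih =>
    intro F _ _ f hf h
    have hf' : ContDiff ℝ (⊤ : ℕ∞) (fderiv ℝ f) := hf.fderiv_right (by simp)
    obtain ⟨C, hC0, hC⟩ := ih (fderiv ℝ f) hf' (by
      intro n hn
      rw [← norm_eq_zero, norm_iteratedFDeriv_fderiv, h (n + 1) (by omega), norm_zero])
    refine ⟨C, hC0, fun x hx => ?_⟩
    have h0 : f 0 = 0 := by
      have := h 0 (by omega)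
      have h2 := congrArg (fun g => g ![]) this
      simpa using h2
    have := (convex_closedBall (0 : V) ‖x‖).norm_image_sub_le_of_norm_fderiv_le (f := f) (C := C * ‖x‖ ^ N)
      (𝕜 := ℝ) (fun y _ => (hf.differentiable (by simp)) y) (fun y hy => by
        have hy' : ‖y‖ ≤ ‖x‖ := by simpa using hy
        exact (hC y (hy'.trans hx)).trans (by gcongr)) (x := 0) (y := x) (by simp) (by simp)
    rw [h0, sub_zero, sub_zero] at this
    rw [pow_succ, ← mul_assoc]; exact this


/-! ### The kernel functions -/

open SchwartzMap in
def phiS {d : ℕ} {ψ₀ : Ed d → ℂ} (hψ : Admissible d ψ₀) : 𝓢(Ed d, ℂ) :=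
  HasCompactSupport.toSchwartzMap (f := ψ₀)
    (HasCompactSupport.of_support_subset_isCompact (isCompact_closedBall (0 : Ed d) (1 / 10))
      (fun x hx => by simpa using hψ.2.1 x hx)) hψ.1

lemma phiS_coe {d : ℕ} {ψ₀ : Ed d → ℂ} (hψ : Admissible d ψ₀) : (phiS hψ : Ed d → ℂ) = ψ₀ := rfl

lemma adm_cs {d : ℕ} {ψ₀ : Ed d → ℂ} (hψ : Admissible d ψ₀) : HasCompactSupport ψ₀ :=
  (HasCompactSupport.of_support_subset_isCompact (isCompact_closedBall (0 : Ed d) (1 / 10))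
      (fun x hx => by simpa using hψ.2.1 x hx))

lemma adm_integrable {d : ℕ} {ψ₀ : Ed d → ℂ} (hψ : Admissible d ψ₀) : Integrable ψ₀ :=
  hψ.1.continuous.integrable_of_hasCompactSupport (adm_cs hψ)

lemma adm_fourier {d : ℕ} {ψ₀ : Ed d → ℂ} (hψ : Admissible d ψ₀) :
    ((𝓕 (phiS hψ) : SchwartzMap (Ed d) ℂ) : Ed d → ℂ) = 𝓕 ψ₀ := by
  rw [SchwartzMap.fourier_coe, phiS_coe]

lemma adm_Q (d : ℕ) [NeZero d] (hd : 3 ≤ d) {ψ₀ : Ed d → ℂ} (hψ : Admissible d ψ₀) :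
    ∃ C, 0 < C ∧ ∀ r, 0 < r → ∀ ξ : Ed d,
      ‖sig d r ξ‖ * ‖𝓕 ψ₀ ξ‖ ≤ C * r ^ (((d : ℝ) - 1) / 2) := by
  obtain ⟨C, hC, hb⟩ := sig_decay d hd
  have hd' : (3 : ℝ) ≤ d := by exact_mod_cast hd
  set a := ((d : ℝ) - 1) / 2 with had
  have ha : 0 < a := by rw [had]; linarith
  obtain ⟨C1, hC1, h1⟩ := taylor_zero (V := Ed d) d (𝓕 (phiS hψ) : SchwartzMap (Ed d) ℂ)
    ((𝓕 (phiS hψ) : SchwartzMap (Ed d) ℂ).smooth _) (by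
      intro n hn; rw [adm_fourier]; exact hψ.2.2.2 n (by omega))
  rw [adm_fourier] at h1
  have h2 : ∀ ξ, ‖𝓕 ψ₀ ξ‖ ≤ ∫ x, ‖ψ₀ x‖ := fun ξ => by
    exact VectorFourier.norm_fourierIntegral_le_integral_norm _ _ _ _ _
  set C2 := ∫ x, ‖ψ₀ x‖
  have hC2 : 0 ≤ C2 := integral_nonneg (fun _ => norm_nonneg _)
  have h3 : ∀ ξ, ‖𝓕 ψ₀ ξ‖ ≤ (C1 + C2 + 1) * ‖ξ‖ ^ a := by
    intro ξ
    rcases le_total ‖ξ‖ 1 with h | h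
    · refine (h1 ξ h).trans ?_
      have : ‖ξ‖ ^ d ≤ ‖ξ‖ ^ a := by
        rcases eq_or_lt_of_le (norm_nonneg ξ) with h0 | h0
        · rw [← h0, Real.zero_rpow ha.ne', zero_pow (NeZero.ne d)]
        · rw [← Real.rpow_natCast]
          exact Real.rpow_le_rpow_of_exponent_ge h0 h (by rw [had]; linarith)
      gcongr; linarith
    · refine (h2 ξ).trans ?_
      have : 1 ≤ ‖ξ‖ ^ a := Real.one_le_rpow h ha.le
      nlinarith
  refine ⟨C * (C1 + C2 + 1), by positivity, fun r hr ξ => ?_⟩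
  calc ‖sig d r ξ‖ * ‖𝓕 ψ₀ ξ‖ ≤ ‖sig d r ξ‖ * ((C1 + C2 + 1) * ‖ξ‖ ^ a) := by gcongr; exact h3 ξ
    _ = (‖sig d r ξ‖ * ‖ξ‖ ^ a) * (C1 + C2 + 1) := by ring
    _ ≤ (C * r ^ a) * (C1 + C2 + 1) := mul_le_mul_of_nonneg_right (hb r hr ξ) (by positivity)
    _ = _ := by ring

lemma psiOf_conv {d : ℕ} (ψ₀ : Ed d → ℂ) :
    psiOf d ψ₀ = convolution ψ₀ ψ₀ (ContinuousLinearMap.mul ℂ ℂ) volume := rfl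

lemma psiOf_smooth {d : ℕ} {ψ₀ : Ed d → ℂ} (hψ : Admissible d ψ₀) : ContDiff ℝ (⊤ : ℕ∞) (psiOf d ψ₀) := by
  rw [psiOf_conv]
  have := HasCompactSupport.contDiff_convolution_right (n := (⊤ : ℕ∞)) (ContinuousLinearMap.mul ℝ ℂ) (adm_cs hψ)
    (adm_integrable hψ).locallyIntegrable hψ.1
  exact this

lemma psiOf_supp {d : ℕ} {ψ₀ : Ed d → ℂ} (hψ : Admissible d ψ₀) (x : Ed d) (hx : psiOf d ψ₀ x ≠ 0) :
    ‖x‖ ≤ 1 / 5 := by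
  by_contra h
  apply hx
  unfold psiOf
  have : ∀ y, ψ₀ y * ψ₀ (x - y) = 0 := by
    intro y
    by_contra hne
    have h1 := hψ.2.1 y (left_ne_zero_of_mul hne)
    have h2 := hψ.2.1 (x - y) (right_ne_zero_of_mul hne)
    have := norm_add_le y (x - y)
    rw [add_sub_cancel] at this
    linarith
  simp [this]

lemma psiOf_cs {d : ℕ} {ψ₀ : Ed d → ℂ} (hψ : Admissible d ψ₀) : HasCompactSupport (psiOf d ψ₀) :=
  (HasCompactSupport.of_support_subset_isCompact (isCompact_closedBall (0 : Ed d) (1 / 5))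
      (fun x hx => by simpa using psiOf_supp hψ x hx))

lemma psiOf_fourier {d : ℕ} {ψ₀ : Ed d → ℂ} (hψ : Admissible d ψ₀) (ξ : Ed d) :
    𝓕 (psiOf d ψ₀) ξ = (𝓕 ψ₀ ξ) ^ 2 := by
  rw [psiOf_conv, Real.fourier_mul_convolution_eq (adm_integrable hψ) (adm_integrable hψ)]
  ring

lemma Fyr_eq {d : ℕ} (ψ₀ : Ed d → ℂ) (y : Ed d) (r : ℝ) (x : Ed d) :
    Fyr d ψ₀ y r x = Fyr d ψ₀ 0 r (x - y) := by simp [Fyr]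

lemma Fyr_supp {d : ℕ} {ψ₀ : Ed d → ℂ} (hψ : Admissible d ψ₀) (y : Ed d) (r : ℝ) (x : Ed d)
    (hx : Fyr d ψ₀ y r x ≠ 0) : |‖x - y‖ - r| ≤ 1 / 5 := by
  by_contra h
  apply hx
  unfold Fyr
  rw [integral_congr_ae (g := fun _ => (0 : ℂ)), integral_zero]
  filter_upwards [sphereM_ae d r] with z hz
  by_contra hne
  apply h
  have h1 := psiOf_supp hψ _ hne
  rw [← hz]
  exact (abs_norm_sub_norm_le _ _).trans h1

lemma Fyr_smooth {d : ℕ} [NeZero d] {ψ₀ : Ed d → ℂ} (hψ : Admissible d ψ₀) (y : Ed d) (r : ℝ) (hr : 0 < r) :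
    ContDiff ℝ (⊤ : ℕ∞) (Fyr d ψ₀ y r) := by
  have : Fact (0 < r) := ⟨hr⟩
  have h1 := HasCompactSupport.contDiff_convolution_right (n := (⊤ : ℕ∞)) (μ := sphereM d r)
    (f := fun _ : Ed d => (1 : ℂ)) (ContinuousLinearMap.mul ℝ ℂ) (psiOf_cs hψ)
    (integrable_const _).locallyIntegrable (psiOf_smooth hψ)
  have h2 : Fyr d ψ₀ y r = fun x => (convolution (fun _ : Ed d => (1 : ℂ)) (psiOf d ψ₀)
      (ContinuousLinearMap.mul ℝ ℂ) (sphereM d r)) (x - y) := by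
    ext x
    simp [convolution, Fyr]
  rw [h2]
  exact h1.comp (contDiff_id.sub contDiff_const)

lemma Fyr_cs {d : ℕ} {ψ₀ : Ed d → ℂ} (hψ : Admissible d ψ₀) (y : Ed d) (r : ℝ) :
    HasCompactSupport (Fyr d ψ₀ y r) :=
  (HasCompactSupport.of_support_subset_isCompact (isCompact_closedBall y (r + 1 / 5))
      (fun x hx => by
        have := Fyr_supp hψ y r x hx
        rw [mem_closedBall, dist_eq_norm]
        linarith [abs_le.1 this]))

lemma Fyr_fourier {d : ℕ} [NeZero d] {ψ₀ : Ed d → ℂ} (hψ : Admissible d ψ₀) (y : Ed d) (r : ℝ) (hr : 0 < r)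
    (ξ : Ed d) : 𝓕 (Fyr d ψ₀ y r) ξ = 𝐞 (-(inner ℝ y ξ)) * (sig d r ξ * (𝓕 ψ₀ ξ) ^ 2) := by
  have : Fact (0 < r) := ⟨hr⟩
  have hps : Integrable (psiOf d ψ₀) := (psiOf_smooth hψ).continuous.integrable_of_hasCompactSupport (psiOf_cs hψ)
  rw [Real.fourier_eq]
  have hIntg : Integrable (fun q : Ed d × Ed d => (𝐞 (-(inner ℝ q.1 ξ)) : ℂ) * psiOf d ψ₀ (q.1 - y - q.2))
      (volume.prod (sphereM d r)) := by
    have hc := (psiOf_smooth hψ).continuous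
    rw [integrable_prod_iff' (by
      apply Continuous.aestronglyMeasurable; fun_prop)]
    constructor
    · refine Filter.Eventually.of_forall fun z => ?_
      refine (Integrable.bdd_mul (c := 1) ((hps.comp_sub_right z).comp_sub_right y) ?_ ?_)
      · apply Continuous.aestronglyMeasurable; fun_prop
      · exact Filter.Eventually.of_forall fun x => (Circle.norm_coe _).le
    · have : ∀ z : Ed d, ∫ x, ‖(𝐞 (-(inner ℝ x ξ)) : ℂ) * psiOf d ψ₀ (x - y - z)‖ = ∫ x, ‖psiOf d ψ₀ x‖ := by
        intro z
        simp only [norm_mul, Circle.norm_coe, one_mul, sub_sub]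
        exact integral_sub_right_eq_self (fun x => ‖psiOf d ψ₀ x‖) (y + z)
      simp only [this]
      exact integrable_const _
  calc ∫ x, 𝐞 (-(inner ℝ x ξ)) • Fyr d ψ₀ y r x
      = ∫ x, ∫ z, (𝐞 (-(inner ℝ x ξ)) : ℂ) * psiOf d ψ₀ (x - y - z) ∂(sphereM d r) := by
        congr 1; ext x; rw [Circle.smul_def, smul_eq_mul, Fyr, integral_const_mul]
    _ = ∫ z, (∫ x, (𝐞 (-(inner ℝ x ξ)) : ℂ) * psiOf d ψ₀ (x - y - z)) ∂(sphereM d r) := by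
        rw [integral_integral_swap hIntg]
    _ = ∫ z, (𝐞 (-(inner ℝ y ξ)) : ℂ) * ((𝐞 (-(inner ℝ z ξ)) : ℂ) * 𝓕 (psiOf d ψ₀) ξ) ∂(sphereM d r) := by
        congr 1; ext z
        rw [Real.fourier_eq, ← integral_add_right_eq_self _ (y + z), ← integral_const_mul, ← integral_const_mul]
        congr 1; ext x
        rw [Circle.smul_def, smul_eq_mul, ← mul_assoc, ← mul_assoc, ← Circle.coe_mul, ← Circle.coe_mul,
          ← AddChar.map_add_eq_mul, ← AddChar.map_add_eq_mul]
        congr 3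
        · rw [inner_add_left, inner_add_left]; ring
        · abel
    _ = _ := by
        rw [integral_const_mul, integral_mul_const, psiOf_fourier hψ]; rfl


/-! ### The Hilbert space vectors -/

open Classical in
def vS {d : ℕ} [NeZero d] {ψ₀ : Ed d → ℂ} (hψ : Admissible d ψ₀) (e : Ed d × ℝ) : SchwartzMap (Ed d) ℂ :=
  if h : 0 < e.2 then (Fyr_cs hψ e.1 e.2).toSchwartzMap (Fyr_smooth hψ e.1 e.2 h) else 0

lemma vS_coe {d : ℕ} [NeZero d] {ψ₀ : Ed d → ℂ} (hψ : Admissible d ψ₀) (e : Ed d × ℝ) (he : 0 < e.2) :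
    (vS hψ e : Ed d → ℂ) = Fyr d ψ₀ e.1 e.2 := by
  rw [vS, dif_pos he]; rfl

lemma vS_fourier {d : ℕ} [NeZero d] {ψ₀ : Ed d → ℂ} (hψ : Admissible d ψ₀) (e : Ed d × ℝ) (he : 0 < e.2)
    (ξ : Ed d) : (𝓕 (vS hψ e) : SchwartzMap (Ed d) ℂ) ξ
      = 𝐞 (-(inner ℝ e.1 ξ)) * (sig d e.2 ξ * (𝓕 ψ₀ ξ) ^ 2) := by
  rw [SchwartzMap.fourier_coe, vS_coe hψ e he, Fyr_fourier hψ e.1 e.2 he]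

def vL {d : ℕ} [NeZero d] {ψ₀ : Ed d → ℂ} (hψ : Admissible d ψ₀) (e : Ed d × ℝ) : Lp ℂ 2 (volume : Measure (Ed d)) :=
  SchwartzMap.toLpCLM ℂ ℂ 2 volume (vS hψ e)

lemma toLpCLM_norm_sq {d : ℕ} (f : SchwartzMap (Ed d) ℂ) :
    ‖SchwartzMap.toLpCLM ℂ ℂ 2 volume f‖ ^ 2 = ∫ x, ‖f x‖ ^ 2 := by
  have h := SchwartzMap.inner_toL2_toL2_eq f f volume
  simp only [inner_self_eq_norm_sq_to_K] at h
  rw [SchwartzMap.toLpCLM_apply]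
  have h2 : ∀ x, ((‖f x‖ : ℂ)) ^ 2 = ((‖f x‖ ^ 2 : ℝ) : ℂ) := by intro x; push_cast; rfl
  simp only [Complex.coe_algebraMap] at h
  simp only [h2, integral_complex_ofReal] at h
  exact_mod_cast h

def tS {d : ℕ} {ψ₀ : Ed d → ℂ} (hψ : Admissible d ψ₀) (y : Ed d) : SchwartzMap (Ed d) ℂ :=
  HasCompactSupport.toSchwartzMap (f := fun x => ψ₀ (x - y))
    (HasCompactSupport.of_support_subset_isCompact (isCompact_closedBall y (1 / 10))
      (fun x hx => by simpa [dist_eq_norm] using hψ.2.1 _ hx)) (hψ.1.comp (contDiff_id.sub contDiff_const))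

lemma tS_apply {d : ℕ} {ψ₀ : Ed d → ℂ} (hψ : Admissible d ψ₀) (y x : Ed d) : tS hψ y x = ψ₀ (x - y) := rfl

lemma tS_fourier {d : ℕ} {ψ₀ : Ed d → ℂ} (hψ : Admissible d ψ₀) (y ξ : Ed d) :
    (𝓕 (tS hψ y) : SchwartzMap (Ed d) ℂ) ξ = 𝐞 (-(inner ℝ y ξ)) * 𝓕 ψ₀ ξ := by
  rw [SchwartzMap.fourier_coe, Real.fourier_eq, Real.fourier_eq, ← integral_add_right_eq_self _ y,
    ← integral_const_mul]
  congr 1; ext x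
  rw [tS_apply, Circle.smul_def, Circle.smul_def, smul_eq_mul, smul_eq_mul, ← mul_assoc, ← Circle.coe_mul,
    ← AddChar.map_add_eq_mul]
  congr 3
  · rw [inner_add_left]; ring
  · abel

lemma H1 (d : ℕ) [NeZero d] (hd : 3 ≤ d) {ψ₀ : Ed d → ℂ} (hψ : Admissible d ψ₀) :
    ∃ A, 0 < A ∧ ∀ r, 0 < r → ∀ (S : Finset (Ed d)), (∀ y ∈ S, ∀ y' ∈ S, y ≠ y' → 1 ≤ dist y y') →
      ∀ c : Ed d → ℂ, (∀ y ∈ S, ‖c y‖ ≤ 1) →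
      ‖∑ y ∈ S, c y • vL hψ (y, r)‖ ^ 2 ≤ A * r ^ (d - 1) * S.card := by
  obtain ⟨C, hC, hQ⟩ := adm_Q d hd hψ
  set I := ∫ x, ‖ψ₀ x‖ ^ 2 with hI
  have hI0 : 0 ≤ I := integral_nonneg fun _ => by positivity
  refine ⟨C ^ 2 * (I + 1), by positivity, fun r hr S hS c hc => ?_⟩
  set G : SchwartzMap (Ed d) ℂ := ∑ y ∈ S, c y • vS hψ (y, r) with hG
  set H : SchwartzMap (Ed d) ℂ := ∑ y ∈ S, c y • tS hψ y with hH
  have e1 : ∑ y ∈ S, c y • vL hψ (y, r) = SchwartzMap.toLpCLM ℂ ℂ 2 volume G := by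
    rw [hG, map_sum]; simp only [map_smul, vL]
  have hGH : ∀ ξ, (𝓕 G : SchwartzMap (Ed d) ℂ) ξ = (sig d r ξ * 𝓕 ψ₀ ξ) * (𝓕 H : SchwartzMap (Ed d) ℂ) ξ := by
    intro ξ
    rw [hG, hH, FourierTransform.fourier_sum, FourierTransform.fourier_sum]
    simp only [FourierTransform.fourier_smul, sum_apply, smul_apply, Finset.mul_sum]
    refine Finset.sum_congr rfl fun y _ => ?_
    rw [vS_fourier hψ (y, r) hr, tS_fourier]
    simp only [smul_eq_mul]; ring
  have hpw : ∀ x, ‖H x‖ ^ 2 ≤ ∑ y ∈ S, ‖ψ₀ (x - y)‖ ^ 2 := by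
    intro x
    by_cases hx : ∃ y ∈ S, ψ₀ (x - y) ≠ 0
    · obtain ⟨y, hy, hne⟩ := hx
      have h0 : ∀ y' ∈ S, y' ≠ y → ψ₀ (x - y') = 0 := by
        intro y' hy' hyy
        by_contra hn
        have h1 := hψ.2.1 _ hn
        have h2 := hψ.2.1 _ hne
        have h3 := hS y' hy' y hy hyy
        have h4 := dist_triangle_left y' y x
        rw [dist_eq_norm x, dist_eq_norm x] at h4
        linarith
      have : H x = c y * ψ₀ (x - y) := by
        rw [hH]
        simp only [sum_apply, smul_apply, tS_apply, smul_eq_mul]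
        exact Finset.sum_eq_single_of_mem y hy (fun y' hy' hyy => by rw [h0 y' hy' hyy, mul_zero])
      rw [this, norm_mul]
      refine le_trans ?_ (Finset.single_le_sum (f := fun y => ‖ψ₀ (x - y)‖ ^ 2) (fun _ _ => by positivity) hy)
      have := hc y hy
      gcongr
      exact mul_le_of_le_one_left (norm_nonneg _) this
    · push Not at hx
      have : H x = 0 := by
        rw [hH]
        simp only [sum_apply, smul_apply, tS_apply, smul_eq_mul]
        exact Finset.sum_eq_zero fun y hy => by rw [hx y hy, mul_zero]
      rw [this]; simp; positivity
  have hsq : ∀ f : SchwartzMap (Ed d) ℂ, Integrable (fun x => ‖f x‖ ^ 2) := fun f =>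
    (f.memLp 2 volume).integrable_norm_pow (by norm_num)
  have hHI : ∫ x, ‖H x‖ ^ 2 ≤ S.card * I := by
    calc ∫ x, ‖H x‖ ^ 2 ≤ ∫ x, ∑ y ∈ S, ‖ψ₀ (x - y)‖ ^ 2 :=
          integral_mono (hsq H) (integrable_finsetSum _ fun y _ => hsq (tS hψ y)) hpw
      _ = ∑ y ∈ S, ∫ x, ‖ψ₀ (x - y)‖ ^ 2 := integral_finsetSum _ fun y _ => hsq (tS hψ y)
      _ = ∑ y ∈ S, I := Finset.sum_congr rfl fun y _ =>
          integral_sub_right_eq_self (fun x => ‖ψ₀ x‖ ^ 2) y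
      _ = _ := by simp
  have e3 : (r : ℝ) ^ (d - 1) = (r ^ (((d : ℝ) - 1) / 2)) ^ 2 := by
    rw [← Real.rpow_natCast, ← Real.rpow_natCast, ← Real.rpow_mul hr.le]
    congr 1
    rw [Nat.cast_sub (by omega)]; push_cast; ring
  rw [e1, toLpCLM_norm_sq, ← SchwartzMap.integral_norm_sq_fourier, e3]
  set a := ((d : ℝ) - 1) / 2
  calc ∫ ξ, ‖(𝓕 G : SchwartzMap (Ed d) ℂ) ξ‖ ^ 2
      ≤ ∫ ξ, (C * r ^ a) ^ 2 * ‖(𝓕 H : SchwartzMap (Ed d) ℂ) ξ‖ ^ 2 := by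
        refine integral_mono (hsq _) ((hsq _).const_mul _) fun ξ => ?_
        simp only
        rw [hGH, norm_mul, mul_pow, norm_mul]
        have := hQ r hr ξ
        exact mul_le_mul_of_nonneg_right (pow_le_pow_left₀ (by positivity) this 2) (by positivity)
    _ = (C * r ^ a) ^ 2 * ∫ x, ‖H x‖ ^ 2 := by
        rw [integral_const_mul, SchwartzMap.integral_norm_sq_fourier]
    _ ≤ (C * r ^ a) ^ 2 * (S.card * (I + 1)) := by
        refine mul_le_mul_of_nonneg_left (hHI.trans ?_) (by positivity)
        gcongr; linarith
    _ = _ := by ring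

lemma vL_inner {d : ℕ} [NeZero d] {ψ₀ : Ed d → ℂ} (hψ : Admissible d ψ₀) (e e' : Ed d × ℝ) :
    inner ℂ (vL hψ e) (vL hψ e') = ∫ x, inner ℂ (vS hψ e x) (vS hψ e' x) :=
  SchwartzMap.inner_toL2_toL2_eq _ _ volume

lemma H3 {d : ℕ} [NeZero d] {ψ₀ : Ed d → ℂ} (hψ : Admissible d ψ₀) (e e' : Ed d × ℝ) (he : 0 < e.2)
    (he' : 0 < e'.2) (h : inner ℂ (vL hψ e) (vL hψ e') ≠ 0) :
    |e.2 - e'.2| ≤ dist e.1 e'.1 + 1 ∧ dist e.1 e'.1 ≤ e.2 + e'.2 + 1 := by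
  rw [vL_inner] at h
  obtain ⟨x, hx⟩ : ∃ x, inner ℂ (vS hψ e x) (vS hψ e' x) ≠ 0 := by
    by_contra hc
    push Not at hc
    apply h; simp only [hc, integral_zero]
  have h1 : vS hψ e x ≠ 0 := fun h0 => hx (by rw [h0, inner_zero_left])
  have h2 : vS hψ e' x ≠ 0 := fun h0 => hx (by rw [h0, inner_zero_right])
  rw [vS_coe hψ e he] at h1
  rw [vS_coe hψ e' he'] at h2
  have h3 := abs_le.1 (Fyr_supp hψ _ _ _ h1)
  have h4 := abs_le.1 (Fyr_supp hψ _ _ _ h2)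
  have h5 := dist_triangle_left e.1 e'.1 x
  have h6 := dist_triangle x e.1 e'.1
  have h7 := dist_triangle_right x e.1 e'.1
  rw [dist_eq_norm x, dist_eq_norm x] at h5 h6
  rw [dist_eq_norm x e.1, dist_eq_norm x e'.1] at h7
  refine ⟨abs_le.2 ⟨?_, ?_⟩, ?_⟩ <;> linarith [dist_comm e.1 e'.1]

lemma adm_fourier_radial {d : ℕ} {ψ₀ : Ed d → ℂ} (hψ : Admissible d ψ₀) (A : Ed d ≃ₗᵢ[ℝ] Ed d) (ξ : Ed d) :
    𝓕 ψ₀ (A ξ) = 𝓕 ψ₀ ξ := by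
  rw [← Real.fourier_comp_linearIsometry]
  have : ψ₀ ∘ A = ψ₀ := by
    funext x
    exact hψ.2.2.1 _ _ (by simp)
  rw [this]

/-- averaging of the Fourier transform of a radial function over spheres. -/
lemma radial_fourier_sphere {d : ℕ} [NeZero d] (Φ : Ed d → ℂ) (hΦ : Integrable Φ)
    (hrad : ∀ (A : Ed d ≃ₗᵢ[ℝ] Ed d) x, Φ (A x) = Φ x) (w : Ed d) (hw : w ≠ 0) :
    ((‖w‖ ^ (d - 1) * (sphereM d 1).real univ : ℝ) : ℂ) * 𝓕 Φ w = ∫ x, Φ x * sig d ‖w‖ x := by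
  have hR : 0 < ‖w‖ := norm_pos_iff.2 hw
  have : Fact (0 < ‖w‖) := ⟨hR⟩
  have hc : ∀ z, ‖z‖ = ‖w‖ → 𝓕 Φ z = 𝓕 Φ w := by
    intro z hz
    obtain ⟨A, hA⟩ := exists_isometry_of_norm_eq w z hz.symm
    rw [← hA, ← Real.fourier_comp_linearIsometry]
    have : Φ ∘ A = Φ := funext fun x => hrad A x
    rw [this]
  have h1 := VectorFourier.integral_fourierIntegral_smul_eq_flip (e := Real.fourierChar) (μ := (volume : Measure (Ed d)))
    (L := innerₗ (Ed d)) (ν := sphereM d ‖w‖) (f := Φ) (g := fun _ => (1 : ℂ)) Real.continuous_fourierChar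
    (by simp only [innerₗ_apply_apply]; fun_prop) hΦ (integrable_const _)
  have h2 : ∫ ξ, VectorFourier.fourierIntegral Real.fourierChar volume (innerₗ (Ed d)) Φ ξ • (1 : ℂ) ∂(sphereM d ‖w‖)
      = ((sphereM d ‖w‖).real univ : ℂ) * 𝓕 Φ w := by
    rw [integral_congr_ae (g := fun _ => 𝓕 Φ w)]
    · simp
    · filter_upwards [sphereM_ae d ‖w‖] with z hz
      rw [smul_eq_mul, mul_one]; exact hc z hz
  have h3 : ∀ x, VectorFourier.fourierIntegral Real.fourierChar (sphereM d ‖w‖) (innerₗ (Ed d)).flip (fun _ => (1 : ℂ)) x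
      = sig d ‖w‖ x := by
    intro x
    simp only [VectorFourier.fourierIntegral, sig, Circle.smul_def, smul_eq_mul, mul_one, LinearMap.flip_apply,
      innerₗ_apply_apply]
    congr 1; ext z; rw [real_inner_comm]
  have h4 : (sphereM d ‖w‖).real univ = ‖w‖ ^ (d - 1) * (sphereM d 1).real univ := by
    rw [sphereM_scale d ‖w‖ hR]
    simp only [Measure.real, Measure.smul_apply, smul_eq_mul, ENNReal.toReal_mul]
    rw [Measure.map_apply (by fun_prop) MeasurableSet.univ, ENNReal.toReal_ofReal (by positivity)]
    rfl
  rw [h2] at h1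
  simp only [h3, smul_eq_mul] at h1
  rw [← h4, h1]

lemma H2 (d : ℕ) [NeZero d] (hd : 3 ≤ d) {ψ₀ : Ed d → ℂ} (hψ : Admissible d ψ₀) :
    ∃ A, 0 < A ∧ ∀ e e' : Ed d × ℝ, 0 < e.2 → 0 < e'.2 → e.1 ≠ e'.1 →
      ‖inner ℂ (vL hψ e) (vL hψ e')‖ ≤
        A * (e.2 * e'.2) ^ (((d : ℝ) - 1) / 2) * (dist e.1 e'.1) ^ (-(((d : ℝ) - 1) / 2)) := by
  obtain ⟨C, hC, hQ⟩ := adm_Q d hd hψ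
  set a := ((d : ℝ) - 1) / 2 with had
  set J := ∫ x, ‖𝓕 ψ₀ x‖ with hJ
  have hJ0 : 0 ≤ J := integral_nonneg fun _ => by positivity
  set m := (sphereM d 1).real univ with hm
  have hm0 : 0 ≤ m := measureReal_nonneg
  refine ⟨C ^ 3 * (J + 1) / m + 1, by positivity, fun e e' he he' hne => ?_⟩
  set P : Ed d → ℂ := fun ξ => sig d e.2 ξ * (𝓕 ψ₀ ξ) ^ 2 with hP
  set P' : Ed d → ℂ := fun ξ => sig d e'.2 ξ * (𝓕 ψ₀ ξ) ^ 2 with hP'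
  have hPv : P = (𝓕 (vS hψ ((0 : Ed d), e.2)) : SchwartzMap (Ed d) ℂ) := by
    ext ξ; rw [vS_fourier hψ ((0 : Ed d), e.2) he]; simp [hP]
  have hPv' : P' = (𝓕 (vS hψ ((0 : Ed d), e'.2)) : SchwartzMap (Ed d) ℂ) := by
    ext ξ; rw [vS_fourier hψ ((0 : Ed d), e'.2) he']; simp [hP']
  set Φ : Ed d → ℂ := fun ξ => (starRingEnd ℂ) (P ξ) * P' ξ with hΦ
  set w := e'.1 - e.1 with hwd
  have hw : w ≠ 0 := sub_ne_zero.2 (Ne.symm hne)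
  have hwn : 0 < ‖w‖ := norm_pos_iff.2 hw
  have hdist : dist e.1 e'.1 = ‖w‖ := by rw [dist_comm, dist_eq_norm]
  have hIntg : Integrable Φ := by
    have i1 : Integrable P' := by rw [hPv']; exact SchwartzMap.integrable _
    obtain ⟨K, hK⟩ : ∃ K, ∀ ξ, ‖P ξ‖ ≤ K := by
      rw [hPv]; exact ⟨_, fun ξ => SchwartzMap.norm_le_seminorm ℝ _ ξ⟩
    refine i1.bdd_mul (c := K) ?_ (Filter.Eventually.of_forall fun ξ => by simpa using hK ξ)
    have : Continuous P := by rw [hPv]; exact SchwartzMap.continuous _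
    exact (Complex.continuous_conj.comp this).aestronglyMeasurable
  have hrad : ∀ (A : Ed d ≃ₗᵢ[ℝ] Ed d) x, Φ (A x) = Φ x := by
    intro A x
    simp only [hΦ, hP, hP', sig_isometry, adm_fourier_radial hψ]
  have hinner : inner ℂ (vL hψ e) (vL hψ e') = 𝓕 Φ w := by
    rw [vL_inner, ← SchwartzMap.integral_inner_fourier_fourier, Real.fourier_eq]
    congr 1; ext ξ
    rw [vS_fourier hψ e he, vS_fourier hψ e' he', RCLike.inner_apply, Circle.smul_def, smul_eq_mul, map_mul,
      ← Circle.coe_inv_eq_conj, ← AddChar.map_neg_eq_inv, neg_neg]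
    have : (𝐞 (-(inner ℝ ξ w)) : ℂ) = 𝐞 (-(inner ℝ e'.1 ξ)) * 𝐞 (inner ℝ e.1 ξ) := by
      rw [← Circle.coe_mul, ← AddChar.map_add_eq_mul]
      congr 2
      rw [hwd, inner_sub_right, real_inner_comm, real_inner_comm ξ e.1]; ring
    rw [this]
    simp only [hΦ, hP, hP']
    ring
  have havg := radial_fourier_sphere Φ hIntg hrad w hw
  have hbound : ‖∫ x, Φ x * sig d ‖w‖ x‖ ≤ C ^ 3 * (e.2 * e'.2) ^ a * ‖w‖ ^ a * J := by
    have : ∀ x, ‖Φ x * sig d ‖w‖ x‖ ≤ (C * e.2 ^ a) * (C * e'.2 ^ a) * (C * ‖w‖ ^ a) * ‖𝓕 ψ₀ x‖ := by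
      intro x
      have q1 := hQ e.2 he x
      have q2 := hQ e'.2 he' x
      have q3 := hQ ‖w‖ hwn x
      calc ‖Φ x * sig d ‖w‖ x‖ = (‖sig d e.2 x‖ * ‖𝓕 ψ₀ x‖) * (‖sig d e'.2 x‖ * ‖𝓕 ψ₀ x‖)
            * (‖sig d ‖w‖ x‖ * ‖𝓕 ψ₀ x‖) * ‖𝓕 ψ₀ x‖ := by
            simp only [hΦ, hP, hP', norm_mul, RCLike.norm_conj, norm_pow]; ring
        _ ≤ _ := by
            refine mul_le_mul_of_nonneg_right ?_ (norm_nonneg _)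
            refine mul_le_mul (mul_le_mul q1 q2 (by positivity) (by positivity)) q3 (by positivity) (by positivity)
    have hfi : Integrable fun x => ‖𝓕 ψ₀ x‖ := by
      rw [← adm_fourier hψ]; exact (SchwartzMap.integrable _).norm
    refine (norm_integral_le_of_norm_le (hfi.const_mul _) (Filter.Eventually.of_forall this)).trans ?_
    rw [integral_const_mul, Real.mul_rpow he.le he'.le, ← hJ]
    apply le_of_eq; ring
  have hpow : ‖w‖ ^ (d - 1) = ‖w‖ ^ a * ‖w‖ ^ a := by
    rw [← Real.rpow_add hwn, ← Real.rpow_natCast]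
    congr 1
    rw [Nat.cast_sub (by omega)]; simp [had]
  rw [hinner, hdist]
  rcases eq_or_lt_of_le hm0 with h0 | h0
  · have : ∀ x, Φ x = 0 := by
      intro x
      have : sig d e.2 x = 0 := by
        rw [sig_eq_besB d e.2 he]
        have := besB_abs_le d (2 * Real.pi * e.2 * ‖x‖)
        rw [← hm, ← h0] at this
        rw [abs_eq_zero.1 (le_antisymm this (abs_nonneg _))]; simp
      simp [hΦ, hP, this]
    have h5 : 𝓕 Φ w = 0 := by rw [Real.fourier_eq]; simp [this]
    rw [h5, norm_zero]; positivity
  · have h6 := congrArg norm havg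
    rw [norm_mul, Complex.norm_real, Real.norm_eq_abs, abs_of_nonneg (by positivity), hpow] at h6
    have hwa : 0 < ‖w‖ ^ a := by positivity
    have h7 : ‖w‖ ^ a * m * ‖𝓕 Φ w‖ ≤ C ^ 3 * (e.2 * e'.2) ^ a * J := by
      have := h6.le.trans hbound
      have e9 : ‖w‖ ^ a * ‖w‖ ^ a * m * ‖𝓕 Φ w‖ = ‖w‖ ^ a * (‖w‖ ^ a * m * ‖𝓕 Φ w‖) := by ring
      have e10 : C ^ 3 * (e.2 * e'.2) ^ a * ‖w‖ ^ a * J = ‖w‖ ^ a * (C ^ 3 * (e.2 * e'.2) ^ a * J) := by ring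
      rw [e9, e10] at this
      exact le_of_mul_le_mul_left this hwa
    rw [Real.rpow_neg hwn.le]
    have hX : 0 < (e.2 * e'.2) ^ a := by positivity
    calc ‖𝓕 Φ w‖ = (‖w‖ ^ a * m * ‖𝓕 Φ w‖) * (‖w‖ ^ a)⁻¹ / m := by field_simp
      _ ≤ (C ^ 3 * (e.2 * e'.2) ^ a * (J + 1)) * (‖w‖ ^ a)⁻¹ / m := by
          refine div_le_div_of_nonneg_right (mul_le_mul_of_nonneg_right (h7.trans ?_) (by positivity)) h0.le
          exact mul_le_mul_of_nonneg_left (by linarith) (by positivity)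
      _ = (C ^ 3 * (J + 1) / m) * (e.2 * e'.2) ^ a * (‖w‖ ^ a)⁻¹ := by ring
      _ ≤ _ := by gcongr; linarith


/-! ### Combinatorial tools -/

lemma hilbert_block {ι κ H : Type*} [DecidableEq κ] [NormedAddCommGroup H] [InnerProductSpace ℂ H]
    (S : Finset ι) (μ : ι → κ) (v : ι → H) :
    ‖∑ e ∈ S, v e‖ ^ 2 ≤ ∑ m ∈ S.image μ, ‖∑ e ∈ S.filter (fun e => μ e = m), v e‖ ^ 2
      + ∑ e ∈ S, ∑ e' ∈ S.filter (fun e' => μ e ≠ μ e'), ‖inner ℂ (v e) (v e')‖ := by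
  have h1 : ((‖∑ e ∈ S, v e‖ ^ 2 : ℝ) : ℂ) = ∑ e ∈ S, ∑ e' ∈ S, inner ℂ (v e) (v e') := by
    have := inner_self_eq_norm_sq_to_K (𝕜 := ℂ) (∑ e ∈ S, v e)
    rw [sum_inner] at this
    simp only [inner_sum] at this
    rw [this]; push_cast; rfl
  have h2 : ∀ e ∈ S, ∑ e' ∈ S, inner ℂ (v e) (v e')
      = ∑ e' ∈ S.filter (fun e' => μ e' = μ e), inner ℂ (v e) (v e')
        + ∑ e' ∈ S.filter (fun e' => μ e ≠ μ e'), inner ℂ (v e) (v e') := by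
    intro e _
    rw [← Finset.sum_filter_add_sum_filter_not S (fun e' => μ e' = μ e)]
    congr 2
    ext e'; simp [eq_comm]
  have h3 : ∑ e ∈ S, ∑ e' ∈ S.filter (fun e' => μ e' = μ e), inner ℂ (v e) (v e')
      = ((∑ m ∈ S.image μ, ‖∑ e ∈ S.filter (fun e => μ e = m), v e‖ ^ 2 : ℝ) : ℂ) := by
    rw [← Finset.sum_fiberwise_of_maps_to (s := S) (t := S.image μ) (g := μ)
      (fun e he => Finset.mem_image_of_mem _ he)]
    push_cast
    refine Finset.sum_congr rfl fun m _ => ?_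
    have := inner_self_eq_norm_sq_to_K (𝕜 := ℂ) (∑ e ∈ S.filter (fun e => μ e = m), v e)
    rw [sum_inner] at this
    simp only [inner_sum] at this
    rw [show ((‖∑ e ∈ S.filter (fun e => μ e = m), v e‖ : ℂ)) ^ 2 = _ from this.symm]
    refine Finset.sum_congr rfl fun e he => ?_
    rw [(Finset.mem_filter.1 he).2]
  rw [Finset.sum_congr rfl h2, Finset.sum_add_distrib, h3] at h1
  set X := ∑ m ∈ S.image μ, ‖∑ e ∈ S.filter (fun e => μ e = m), v e‖ ^ 2
  have h4 : ((‖∑ e ∈ S, v e‖ ^ 2 - X : ℝ) : ℂ) = ∑ e ∈ S, ∑ e' ∈ S.filter (fun e' => μ e ≠ μ e'), inner ℂ (v e) (v e') := by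
    rw [Complex.ofReal_sub, h1]; ring
  have h5 : ‖∑ e ∈ S, v e‖ ^ 2 - X ≤ ‖((‖∑ e ∈ S, v e‖ ^ 2 - X : ℝ) : ℂ)‖ := by
    rw [Complex.norm_real]; exact le_abs_self _
  rw [h4] at h5
  have h6 : ‖∑ e ∈ S, ∑ e' ∈ S.filter (fun e' => μ e ≠ μ e'), inner ℂ (v e) (v e')‖
      ≤ ∑ e ∈ S, ∑ e' ∈ S.filter (fun e' => μ e ≠ μ e'), ‖inner ℂ (v e) (v e')‖ :=
    (norm_sum_le _ _).trans (Finset.sum_le_sum fun e _ => norm_sum_le _ _)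
  linarith

lemma dyadic_index (g : ℝ) (hg : 1 ≤ g) :
    (2 : ℝ) ^ (Nat.log 2 ⌊g⌋₊) ≤ g ∧ g < 2 ^ (Nat.log 2 ⌊g⌋₊ + 1) := by
  have h0 : ⌊g⌋₊ ≠ 0 := by
    have := Nat.floor_pos.2 hg; omega
  constructor
  · have := Nat.pow_log_le_self 2 h0
    calc (2 : ℝ) ^ (Nat.log 2 ⌊g⌋₊) ≤ (⌊g⌋₊ : ℝ) := by exact_mod_cast this
      _ ≤ g := Nat.floor_le (by linarith)
  · have := Nat.lt_pow_succ_log_self (b := 2) (by norm_num) ⌊g⌋₊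
    have h1 : ⌊g⌋₊ + 1 ≤ 2 ^ (Nat.log 2 ⌊g⌋₊ + 1) := this
    calc g < ⌊g⌋₊ + 1 := Nat.lt_floor_add_one g
      _ ≤ _ := by exact_mod_cast h1

lemma dyadic_sum (s b : ℝ) (hb : 0 < b) : ∃ C, 0 < C ∧ ∀ {ι : Type} (S : Finset ι) (f g : ι → ℝ) (K t : ℝ),
    0 ≤ K → 1 ≤ t → (∀ e ∈ S, t ≤ g e) → (∀ e ∈ S, f e ≤ g e ^ s) →
    (∀ l : ℕ, ((S.filter (fun e => (2 : ℝ) ^ l ≤ g e ∧ g e < 2 ^ (l + 1))).card : ℝ) ≤ K * ((2 : ℝ) ^ l) ^ (-s - b)) →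
    ∑ e ∈ S, f e ≤ C * K * t ^ (-b) := by
  set q : ℝ := 2 ^ (-b) with hq
  have hq0 : 0 < q := by positivity
  have hq1 : q < 1 := Real.rpow_lt_one_of_one_lt_of_neg (by norm_num) (by linarith)
  refine ⟨2 ^ |s| * (1 - q)⁻¹ * 2 ^ b, by have : 0 < 1 - q := by linarith
                                          positivity, ?_⟩
  intro ι S f g K t hK ht hg hf hc
  classical
  set lg : ι → ℕ := fun e => Nat.log 2 ⌊g e⌋₊ with hlg
  set l0 := Nat.log 2 ⌊t⌋₊ with hl0
  have hlg0 : ∀ e ∈ S, l0 ≤ lg e := fun e he => Nat.log_mono_right (Nat.floor_mono (hg e he))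
  obtain ⟨M, hM⟩ : ∃ M, ∀ e ∈ S, lg e < M :=
    ⟨S.sup lg + 1, fun e he => Nat.lt_succ_of_le (Finset.le_sup he)⟩
  have hdy : ∀ e ∈ S, (2 : ℝ) ^ (lg e) ≤ g e ∧ g e < 2 ^ (lg e + 1) := fun e he =>
    dyadic_index (g e) (ht.trans (hg e he))
  rw [← Finset.sum_fiberwise_of_maps_to (s := S) (t := Finset.Ico l0 M) (g := lg)
    (fun e he => Finset.mem_Ico.2 ⟨hlg0 e he, hM e he⟩)]
  have hl : ∀ l ∈ Finset.Ico l0 M, ∑ e ∈ S.filter (fun e => lg e = l), f e ≤ 2 ^ |s| * K * q ^ l := by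
    intro l _
    have h1 : ∀ e ∈ S.filter (fun e => lg e = l), f e ≤ 2 ^ |s| * ((2 : ℝ) ^ l) ^ s := by
      intro e he
      obtain ⟨he, hel⟩ := Finset.mem_filter.1 he
      have h2 := hdy e he
      rw [hel] at h2
      have hp : (0 : ℝ) < 2 ^ l := by positivity
      refine (hf e he).trans ?_
      rcases le_total 0 s with h | h
      · rw [abs_of_nonneg h, ← Real.mul_rpow (by norm_num) hp.le]
        exact Real.rpow_le_rpow (by linarith) (by rw [pow_succ] at h2; linarith) h
      · calc g e ^ s ≤ ((2 : ℝ) ^ l) ^ s := Real.rpow_le_rpow_of_nonpos hp h2.1 h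
          _ ≤ _ := le_mul_of_one_le_left (by positivity) (Real.one_le_rpow (by norm_num) (abs_nonneg s))
    have h3 : ((S.filter (fun e => lg e = l)).card : ℝ) ≤ K * ((2 : ℝ) ^ l) ^ (-s - b) := by
      refine le_trans ?_ (hc l)
      have : S.filter (fun e => lg e = l) ⊆ S.filter (fun e => (2 : ℝ) ^ l ≤ g e ∧ g e < 2 ^ (l + 1)) := by
        intro e he
        obtain ⟨he, hel⟩ := Finset.mem_filter.1 he
        have h2 := hdy e he
        rw [hel] at h2
        exact Finset.mem_filter.2 ⟨he, h2⟩
      exact_mod_cast Finset.card_le_card this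
    refine (Finset.sum_le_card_nsmul _ _ _ h1).trans ?_
    rw [nsmul_eq_mul]
    calc _ ≤ (K * ((2 : ℝ) ^ l) ^ (-s - b)) * (2 ^ |s| * ((2 : ℝ) ^ l) ^ s) := by gcongr
      _ = 2 ^ |s| * K * (((2 : ℝ) ^ l) ^ (-s - b) * ((2 : ℝ) ^ l) ^ s) := by ring
      _ = 2 ^ |s| * K * q ^ l := by
        rw [← Real.rpow_add (by positivity), hq, ← Real.rpow_natCast, ← Real.rpow_natCast, ← Real.rpow_mul (by norm_num),
          ← Real.rpow_mul (by norm_num)]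
        congr 2; ring
  refine (Finset.sum_le_sum hl).trans ?_
  rw [← Finset.mul_sum]
  have h5 : ∑ i ∈ Finset.Ico l0 M, q ^ i ≤ q ^ l0 / (1 - q) := geom_sum_Ico_le_of_lt_one hq0.le hq1
  have h6 : q ^ l0 ≤ 2 ^ b * t ^ (-b) := by
    have h7 := (dyadic_index t ht).2
    have h8 : q ^ l0 = ((2 : ℝ) ^ l0) ^ (-b) := by
      rw [hq, ← Real.rpow_natCast, ← Real.rpow_natCast, ← Real.rpow_mul (by norm_num),
          ← Real.rpow_mul (by norm_num)]
      congr 1; ring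
    have h9 : (2 : ℝ) ^ b = (2⁻¹) ^ (-b) := by rw [Real.inv_rpow (by norm_num), Real.rpow_neg (by norm_num), inv_inv]
    rw [h8, h9, ← Real.mul_rpow (by norm_num) (by linarith)]
    refine Real.rpow_le_rpow_of_nonpos (by linarith) ?_ (by linarith)
    rw [pow_succ] at h7; rw [hl0]; linarith
  have h10 : 0 < 1 - q := by linarith
  calc 2 ^ |s| * K * ∑ i ∈ Finset.Ico l0 M, q ^ i ≤ 2 ^ |s| * K * ((2 ^ b * t ^ (-b)) / (1 - q)) := by
        refine mul_le_mul_of_nonneg_left (h5.trans ?_) (by positivity)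
        gcongr
    _ = _ := by ring

lemma exists_maxsep {X : Type*} [PseudoMetricSpace X] (P : Finset X) (ρ : ℝ) (hρ : 0 ≤ ρ) :
    ∃ Q ⊆ P, (∀ x ∈ Q, ∀ y ∈ Q, x ≠ y → ρ < dist x y) ∧ ∀ p ∈ P, ∃ q ∈ Q, dist p q ≤ ρ := by
  classical
  induction P using Finset.induction_on with
  | empty => exact ⟨∅, by simp⟩
  | insert p P hp ih =>
    obtain ⟨Q, hQP, h1, h2⟩ := ih
    by_cases h : ∃ q ∈ Q, dist p q ≤ ρ
    · refine ⟨Q, hQP.trans (Finset.subset_insert _ _), h1, fun x hx => ?_⟩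
      rcases Finset.mem_insert.1 hx with rfl | hx
      · exact h
      · exact h2 x hx
    · push Not at h
      refine ⟨insert p Q, Finset.insert_subset_insert _ hQP, ?_, fun x hx => ?_⟩
      · intro x hx y hy hxy
        rcases Finset.mem_insert.1 hx with hx' | hx' <;> rcases Finset.mem_insert.1 hy with hy' | hy'
        · exact absurd (hx'.trans hy'.symm) hxy
        · rw [hx']; exact h y hy'
        · rw [hy', dist_comm]; exact h x hx'
        · exact h1 x hx' y hy' hxy
      · rcases Finset.mem_insert.1 hx with rfl | hx
        · exact ⟨x, Finset.mem_insert_self _ _, by simpa using hρ⟩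
        · obtain ⟨q, hq, hd⟩ := h2 x hx
          exact ⟨q, Finset.mem_insert_of_mem hq, hd⟩

def annul {d : ℕ} (y : Ed d) (r h : ℝ) : Set (Ed d) := {x | |dist x y - r| ≤ h}

lemma annul_vol (d : ℕ) [NeZero d] (y : Ed d) (r h : ℝ) (hr : 0 < r) (hh : 0 < h) :
    volume (annul y r h) ≤ ENNReal.ofReal (2 * d * h * (r + h) ^ (d - 1)) * volume (ball (0 : Ed d) 1) := by
  have hd1 : 1 ≤ d := Nat.one_le_iff_ne_zero.2 (NeZero.ne d)
  have hd1' : (1 : ℝ) ≤ d := by exact_mod_cast hd1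
  have hdd : d - 1 + 1 = d := by omega
  rcases le_total r h with hrh | hrh
  · have hs : annul y r h ⊆ closedBall y (r + h) := by
      intro x hx
      have := (abs_le.1 (show |dist x y - r| ≤ h from hx)).2
      rw [mem_closedBall]; linarith
    refine (measure_mono hs).trans ?_
    rw [Measure.addHaar_closedBall _ _ (by positivity), finrank_euclideanSpace_fin]
    gcongr
    nth_rewrite 1 [← hdd]
    rw [pow_succ]
    have : 0 ≤ (r + h) ^ (d - 1) := by positivity
    nlinarith [mul_le_mul_of_nonneg_left (show r + h ≤ 2 * d * h by nlinarith) this]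
  · have hs : annul y r h ⊆ closedBall y (r + h) \ ball y (r - h) := by
      intro x hx
      have := (abs_le.1 (show |dist x y - r| ≤ h from hx))
      rw [mem_sdiff, mem_closedBall, mem_ball]; constructor <;> linarith
    refine (measure_mono hs).trans ?_
    rw [measure_sdiff (ball_subset_closedBall.trans (closedBall_subset_closedBall (by linarith)))
      measurableSet_ball.nullMeasurableSet measure_ball_lt_top.ne,
      Measure.addHaar_closedBall _ _ (by positivity), Measure.addHaar_ball _ y (r := r - h) (by linarith), finrank_euclideanSpace_fin,
      ← ENNReal.sub_mul (fun _ _ => measure_ball_lt_top.ne), ← ENNReal.ofReal_sub _ (by apply pow_nonneg; linarith)]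
    gcongr
    have hmv : (r + h) ^ d - (r - h) ^ d ≤ (d * (r + h) ^ (d - 1)) * ((r + h) - (r - h)) := by
      rw [← geom_sum₂_mul]
      refine mul_le_mul_of_nonneg_right ?_ (by linarith)
      refine (Finset.sum_le_card_nsmul _ _ ((r + h) ^ (d - 1)) ?_).trans (by simp)
      intro i hi
      have hi' := Finset.mem_range.1 hi
      calc (r + h) ^ i * (r - h) ^ (d - 1 - i) ≤ (r + h) ^ i * (r + h) ^ (d - 1 - i) := by
            gcongr; linarith
        _ = (r + h) ^ (d - 1) := by rw [← pow_add]; congr 1; omega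
    refine hmv.trans (le_of_eq ?_); ring


def SepE {d : ℕ} (E : Finset (Ed d × ℝ)) : Prop :=
  (∀ e ∈ E, 1 ≤ e.2) ∧ (∀ e ∈ E, ∀ e' ∈ E, e.1 ≠ e'.1 → 1 ≤ dist e.1 e'.1) ∧
    (∀ e ∈ E, ∀ e' ∈ E, e.2 ≠ e'.2 → 1 ≤ |e.2 - e'.2|)

open Classical in
def Dens {d : ℕ} (E : Finset (Ed d × ℝ)) (u : ℝ) : Prop :=
  ∀ e ∈ E, ∀ ρ : ℝ, 1 / 2 ≤ ρ → ρ ≤ e.2 / 2 → ((E.filter (fun e' => dist e' e ≤ ρ)).card : ℝ) ≤ 2 * u * ρ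

open Classical in
lemma far_count (d : ℕ) (hd : 4 ≤ d) : ∃ C, 0 < C ∧ ∀ (E : Finset (Ed d × ℝ)) (u : ℝ), 0 ≤ u → Dens E u →
    ∀ (y : Ed d) (r : ℝ) (l : ℕ), (2 : ℝ) ^ l ≤ r →
      ((E.filter (fun e' => ((2 : ℝ) ^ l ≤ e'.2 ∧ e'.2 < 2 ^ (l + 1)) ∧ |dist e'.1 y - r| ≤ e'.2 + 1)).card : ℝ)
        ≤ C * u * r ^ (d - 1) * ((2 : ℝ) ^ l) ^ (-((d : ℝ) - 2)) := by
  have : NeZero d := ⟨by omega⟩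
  refine ⟨2 * 4 ^ d * (24 * d * 5 ^ (d - 1)), by positivity, ?_⟩
  intro E u hu hE y r l hlr
  set t : ℝ := 2 ^ l with ht
  have ht1 : 1 ≤ t := one_le_pow₀ (by norm_num)
  set P := E.filter (fun e' => (t ≤ e'.2 ∧ e'.2 < 2 ^ (l + 1)) ∧ |dist e'.1 y - r| ≤ e'.2 + 1) with hP
  have hPm : ∀ e' ∈ P, e' ∈ E ∧ t ≤ e'.2 ∧ e'.2 < 2 * t ∧ |dist e'.1 y - r| ≤ 2 * t + 1 := by
    intro e' he'
    obtain ⟨h1, ⟨h2, h3⟩, h4⟩ := Finset.mem_filter.1 he'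
    rw [pow_succ, ← ht] at h3
    exact ⟨h1, h2, by linarith, by linarith⟩
  obtain ⟨Q, hQP, hQ1, hQ2⟩ := exists_maxsep P (t / 2) (by linarith)
  have hcard : (P.card : ℝ) ≤ Q.card * (u * t) := by
    have h1 : P ⊆ Q.biUnion (fun q => E.filter (fun e' => dist e' q ≤ t / 2)) := by
      intro p hp
      obtain ⟨q, hq, hpq⟩ := hQ2 p hp
      exact Finset.mem_biUnion.2 ⟨q, hq, Finset.mem_filter.2 ⟨(hPm p hp).1, hpq⟩⟩
    have h2 := (Finset.card_le_card h1).trans Finset.card_biUnion_le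
    calc (P.card : ℝ) ≤ ∑ q ∈ Q, ((E.filter (fun e' => dist e' q ≤ t / 2)).card : ℝ) := by exact_mod_cast h2
      _ ≤ ∑ q ∈ Q, (u * t) := by
          refine Finset.sum_le_sum fun q hq => ?_
          have hq' := hPm q (hQP hq)
          refine (hE q hq'.1 (t / 2) (by linarith) (by linarith)).trans (le_of_eq (by ring))
      _ = _ := by simp
  have hvol : (Q.card : ℝ) * ((t / 4) ^ d * (t / 2)) ≤ (2 * d * (4 * t) * (r + 4 * t) ^ (d - 1)) * (3 * t) := by
    have hsub : ⋃ q ∈ Q, closedBall q (t / 4) ⊆ annul y r (4 * t) ×ˢ Icc (0 : ℝ) (3 * t) := by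
      intro x hx
      simp only [mem_iUnion] at hx
      obtain ⟨q, hq, hxq⟩ := hx
      obtain ⟨_, h2, h3, h4⟩ := hPm q (hQP hq)
      rw [mem_closedBall, Prod.dist_eq, max_le_iff] at hxq
      obtain ⟨h5, h6⟩ := hxq
      rw [Real.dist_eq] at h6
      have h6 := abs_le.1 h6
      have h4 := abs_le.1 h4
      have h7 := dist_triangle x.1 q.1 y
      have h8 := dist_triangle_left q.1 y x.1
      refine ⟨show |dist x.1 y - r| ≤ 4 * t from abs_le.2 ⟨?_, ?_⟩, ?_, ?_⟩ <;> linarith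
    have hdis : (Q : Set (Ed d × ℝ)).PairwiseDisjoint (fun q => closedBall q (t / 4)) := by
      intro q hq q' hq' hne
      exact closedBall_disjoint_closedBall (by have := hQ1 q hq q' hq' hne; linarith)
    have h1 := measure_mono (μ := (volume : Measure (Ed d × ℝ))) hsub
    rw [measure_biUnion_finset hdis (fun q _ => measurableSet_closedBall), Measure.volume_eq_prod, Measure.prod_prod] at h1
    have h2 : ∀ q : Ed d × ℝ, (volume.prod volume : Measure (Ed d × ℝ)) (closedBall q (t / 4))
        = ENNReal.ofReal ((t / 4) ^ d * (t / 2)) * volume (ball (0 : Ed d) 1) := by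
      intro q
      rw [← Prod.mk.eta (p := q), ← closedBall_prod_same, Measure.prod_prod, Real.volume_closedBall,
        Measure.addHaar_closedBall _ _ (by linarith), finrank_euclideanSpace_fin,
        ENNReal.ofReal_mul (q := t / 2) (by positivity)]
      rw [show 2 * (t / 4) = t / 2 by ring]; ring
    simp only [h2, Finset.sum_const, Real.volume_Icc, sub_zero, nsmul_eq_mul] at h1
    have h3 := h1.trans (mul_le_mul_left (annul_vol d y r (4 * t) (by linarith) (by linarith)) _)
    have h4 : ENNReal.ofReal ((Q.card : ℝ) * ((t / 4) ^ d * (t / 2))) * volume (ball (0 : Ed d) 1)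
        ≤ ENNReal.ofReal ((2 * d * (4 * t) * (r + 4 * t) ^ (d - 1)) * (3 * t)) * volume (ball (0 : Ed d) 1) := by
      have hr0 : 0 ≤ r := by linarith
      rw [ENNReal.ofReal_mul (by positivity), ENNReal.ofReal_natCast, ENNReal.ofReal_mul (q := 3 * t) (by positivity)]
      refine le_trans (le_of_eq ?_) (h3.trans (le_of_eq ?_)) <;> ring
    have hω : volume (ball (0 : Ed d) 1) ≠ 0 := (measure_ball_pos _ _ one_pos).ne'
    have h5 := (ENNReal.mul_le_mul_iff_left hω measure_ball_lt_top.ne).1 h4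
    have hr0 : 0 ≤ r := by linarith
    exact (ENNReal.ofReal_le_ofReal_iff (by positivity)).1 h5
  have hr0 : 0 < r := by linarith
  have hvol2 : (Q.card : ℝ) * ((t / 4) ^ d * (t / 2)) ≤ (24 * d * 5 ^ (d - 1)) * (t ^ 2 * r ^ (d - 1)) := by
    refine hvol.trans ?_
    have : (r + 4 * t) ^ (d - 1) ≤ 5 ^ (d - 1) * r ^ (d - 1) := by
      rw [← mul_pow]; gcongr; linarith
    calc (2 * d * (4 * t) * (r + 4 * t) ^ (d - 1)) * (3 * t) ≤ (2 * d * (4 * t) * (5 ^ (d - 1) * r ^ (d - 1))) * (3 * t) := by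
          gcongr
      _ = _ := by ring
  have e1 : t ^ (-((d : ℝ) - 2)) = (t ^ (d - 2))⁻¹ := by
    rw [Real.rpow_neg (by linarith), ← Real.rpow_natCast, Nat.cast_sub (by omega)]; norm_num
  have e2 : t ^ (d - 2) * t ^ 2 = t ^ d := by rw [← pow_add]; congr 1; omega
  rw [e1]
  have htd : 0 < t ^ (d - 2) := by positivity
  rw [← div_eq_mul_inv, le_div_iff₀ htd]
  have hQc : (Q.card : ℝ) * (t * t ^ (d - 2)) ≤ 2 * 4 ^ d * ((24 * d * 5 ^ (d - 1)) * r ^ (d - 1)) := by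
    have h6 : (Q.card : ℝ) * ((t / 4) ^ d * (t / 2)) = (Q.card * (t * t ^ (d - 2))) * t ^ 2 / (2 * 4 ^ d) := by
      rw [div_pow, ← e2]; field_simp
    rw [h6, div_le_iff₀ (by positivity)] at hvol2
    have ht2 : 0 < t ^ 2 := by positivity
    refine le_of_mul_le_mul_right (hvol2.trans (le_of_eq ?_)) ht2
    ring
  calc (P.card : ℝ) * t ^ (d - 2) ≤ (Q.card * (u * t)) * t ^ (d - 2) := by gcongr
    _ = u * (Q.card * (t * t ^ (d - 2))) := by ring
    _ ≤ u * (2 * 4 ^ d * ((24 * d * 5 ^ (d - 1)) * r ^ (d - 1))) := by gcongr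
    _ = _ := by ring

open Classical in
lemma offdiag_one (d : ℕ) (hd : 4 ≤ d) : ∃ C, 0 < C ∧ ∀ (E : Finset (Ed d × ℝ)) (u A L : ℝ), 0 ≤ u → 0 < A → 2 ≤ L →
    Dens E u → ∀ e ∈ E, 0 < e.2 → ∀ K : Ed d × ℝ → ℝ,
    (∀ e' ∈ E, e.1 ≠ e'.1 → K e' ≤ A * (e.2 * e'.2) ^ (((d : ℝ) - 1) / 2) * (dist e.1 e'.1) ^ (-(((d : ℝ) - 1) / 2))) →
    (∀ e' ∈ E, K e' ≠ 0 → |e.2 - e'.2| ≤ dist e.1 e'.1 + 1 ∧ dist e.1 e'.1 ≤ e.2 + e'.2 + 1) →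
    ∑ e' ∈ E.filter (fun e' => L ≤ e'.2 ∧ e'.2 ≤ e.2 ∧ L ≤ |e.2 - e'.2|), K e'
      ≤ C * A * u * L ^ (-(((d : ℝ) - 3) / 2)) * e.2 ^ (d - 1) := by
  have hd4 : (4 : ℝ) ≤ d := by exact_mod_cast hd
  set a := ((d : ℝ) - 1) / 2 with ha
  set b := ((d : ℝ) - 3) / 2 with hb
  have hb0 : 0 < b := by rw [hb]; linarith
  have ha0 : 0 < a := by rw [ha]; linarith
  obtain ⟨C0, hC0, hfar⟩ := far_count d hd
  obtain ⟨C1, hC1, hdy1⟩ := dyadic_sum (-a) b hb0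
  obtain ⟨C2, hC2, hdy2⟩ := dyadic_sum a b hb0
  refine ⟨C1 * 8 * 2 ^ b + C2 * C0 * 8 ^ a, by positivity, ?_⟩
  intro E u A L hu hA hL hE e he hr K hK2 hK3
  set N := E.filter (fun e' => L ≤ e'.2 ∧ e'.2 ≤ e.2 ∧ L ≤ |e.2 - e'.2|) with hN
  set N' := N.filter (fun e' => K e' ≠ 0) with hN'
  have hsum0 : ∑ e' ∈ N, K e' = ∑ e' ∈ N', K e' := (Finset.sum_filter_ne_zero N).symm
  have hN'm : ∀ e' ∈ N', e' ∈ E ∧ L ≤ e'.2 ∧ e'.2 ≤ e.2 ∧ L ≤ |e.2 - e'.2| ∧ |e.2 - e'.2| ≤ dist e.1 e'.1 + 1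
      ∧ dist e.1 e'.1 ≤ e.2 + e'.2 + 1 ∧ e.1 ≠ e'.1 := by
    intro e' he'
    obtain ⟨h1, h2⟩ := Finset.mem_filter.1 he'
    obtain ⟨h3, h4, h5, h6⟩ := Finset.mem_filter.1 h1
    obtain ⟨h7, h8⟩ := hK3 e' h3 h2
    refine ⟨h3, h4, h5, h6, h7, h8, fun h9 => ?_⟩
    rw [h9, dist_self] at h7; linarith
  have hpow : e.2 ^ (d - 1) = e.2 ^ a * e.2 ^ a := by
    rw [← Real.rpow_add hr, ← Real.rpow_natCast]
    congr 1
    rw [Nat.cast_sub (by omega)]; simp [ha]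
  set N1 := N'.filter (fun e' => dist e.1 e'.1 ≤ e.2 / 8) with hN1
  set N2 := N'.filter (fun e' => ¬ dist e.1 e'.1 ≤ e.2 / 8) with hN2
  have hsplit : ∑ e' ∈ N', K e' = ∑ e' ∈ N1, K e' + ∑ e' ∈ N2, K e' :=
    (Finset.sum_filter_add_sum_filter_not N' _ _).symm
  have hr1 : 0 < e.2 ^ (d - 1) := by positivity
  -- near part
  have hnear : ∑ e' ∈ N1, K e' ≤ (C1 * (8 * u) * (L / 2) ^ (-b)) * (A * e.2 ^ (d - 1)) := by
    have hd1 := hdy1 N1 (fun e' => K e' / (A * e.2 ^ (d - 1))) (fun e' => dist e.1 e'.1) (8 * u) (L / 2)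
      (by positivity) (by linarith) ?_ ?_ ?_
    · rw [← Finset.sum_div, div_le_iff₀ (by positivity)] at hd1
      exact hd1
    · intro e' he'
      obtain ⟨_, h2, h3, h4, h5, h6, h7⟩ := hN'm e' (Finset.mem_filter.1 he').1
      linarith
    · intro e' he'
      obtain ⟨h1, h2, h3, h4, h5, h6, h7⟩ := hN'm e' (Finset.mem_filter.1 he').1
      rw [div_le_iff₀ (by positivity)]
      refine (hK2 e' h1 h7).trans ?_
      have hr' : 0 ≤ e'.2 := by linarith
      rw [Real.mul_rpow hr.le hr', hpow]
      have : e'.2 ^ a ≤ e.2 ^ a := Real.rpow_le_rpow hr' h3 ha0.le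
      have hdp : 0 < dist e.1 e'.1 ^ (-a) := Real.rpow_pos_of_pos (dist_pos.2 h7) _
      calc A * (e.2 ^ a * e'.2 ^ a) * dist e.1 e'.1 ^ (-a) ≤ A * (e.2 ^ a * e.2 ^ a) * dist e.1 e'.1 ^ (-a) := by gcongr
        _ = _ := by ring
    · intro l
      have hexp : - -a - b = 1 := by rw [ha, hb]; ring
      rw [hexp, Real.rpow_one]
      rcases (N1.filter (fun e' => (2 : ℝ) ^ l ≤ dist e.1 e'.1 ∧ dist e.1 e'.1 < 2 ^ (l + 1))).eq_empty_or_nonempty with hem | ⟨e0, he0⟩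
      · rw [hem]; simp; positivity
      have h2l : (1 : ℝ) ≤ 2 ^ l := one_le_pow₀ (by norm_num)
      have hle : (2 : ℝ) ^ l ≤ e.2 / 8 := by
        obtain ⟨h1, h2⟩ := Finset.mem_filter.1 he0
        exact h2.1.trans (Finset.mem_filter.1 h1).2
      have hdens := hE e he (4 * 2 ^ l) (by linarith) (by linarith)
      calc _ ≤ ((E.filter (fun e' => dist e' e ≤ 4 * 2 ^ l)).card : ℝ) := by
            have : (N1.filter (fun e' => (2 : ℝ) ^ l ≤ dist e.1 e'.1 ∧ dist e.1 e'.1 < 2 ^ (l + 1)))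
                ⊆ E.filter (fun e' => dist e' e ≤ 4 * 2 ^ l) := by
              intro e' he'
              obtain ⟨h1, h2, h3⟩ := Finset.mem_filter.1 he'
              obtain ⟨q1, q2, q3, q4, q5, q6, q7⟩ := hN'm e' (Finset.mem_filter.1 h1).1
              rw [pow_succ] at h3
              refine Finset.mem_filter.2 ⟨q1, ?_⟩
              rw [dist_comm, Prod.dist_eq, max_le_iff, Real.dist_eq]
              constructor <;> linarith
            exact_mod_cast Finset.card_le_card this
        _ ≤ _ := hdens
        _ = _ := by ring
  have hfarS : ∑ e' ∈ N2, K e' ≤ (C2 * (C0 * u * e.2 ^ (d - 1)) * L ^ (-b)) * (8 ^ a * A) := by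
    have hd2 := hdy2 N2 (fun e' => K e' / (8 ^ a * A)) (fun e' => e'.2) (C0 * u * e.2 ^ (d - 1)) L
      (by positivity) (by linarith) ?_ ?_ ?_
    · rw [← Finset.sum_div, div_le_iff₀ (by positivity)] at hd2
      exact hd2
    · intro e' he'
      exact (hN'm e' (Finset.mem_filter.1 he').1).2.1
    · intro e' he'
      obtain ⟨h1, h2, h3, h4, h5, h6, h7⟩ := hN'm e' (Finset.mem_filter.1 he').1
      have h8 := (Finset.mem_filter.1 he').2
      push Not at h8
      rw [div_le_iff₀ (by positivity)]
      refine (hK2 e' h1 h7).trans ?_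
      have hr' : 0 ≤ e'.2 := by linarith
      have : dist e.1 e'.1 ^ (-a) ≤ (e.2 / 8) ^ (-a) := Real.rpow_le_rpow_of_nonpos (by positivity) h8.le (by linarith)
      calc A * (e.2 * e'.2) ^ a * dist e.1 e'.1 ^ (-a) ≤ A * (e.2 * e'.2) ^ a * (e.2 / 8) ^ (-a) := by gcongr
        _ = _ := by
          rw [Real.mul_rpow hr.le hr', Real.rpow_neg (by positivity), Real.div_rpow hr.le (by norm_num)]
          have : 0 < e.2 ^ a := by positivity
          field_simp
    · intro l
      have hexp : -a - b = -((d : ℝ) - 2) := by rw [ha, hb]; ring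
      rw [hexp]
      rcases (N2.filter (fun e' => (2 : ℝ) ^ l ≤ e'.2 ∧ e'.2 < 2 ^ (l + 1))).eq_empty_or_nonempty with hem | ⟨e0, he0⟩
      · rw [hem]; simp; positivity
      have hle : (2 : ℝ) ^ l ≤ e.2 := by
        obtain ⟨h1, h2⟩ := Finset.mem_filter.1 he0
        obtain ⟨q1, q2, q3, q4, q5, q6, q7⟩ := hN'm e0 (Finset.mem_filter.1 h1).1
        linarith
      refine le_trans ?_ (hfar E u hu hE e.1 e.2 l hle)
      have : (N2.filter (fun e' => (2 : ℝ) ^ l ≤ e'.2 ∧ e'.2 < 2 ^ (l + 1)))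
          ⊆ E.filter (fun e' => ((2 : ℝ) ^ l ≤ e'.2 ∧ e'.2 < 2 ^ (l + 1)) ∧ |dist e'.1 e.1 - e.2| ≤ e'.2 + 1) := by
        intro e' he'
        obtain ⟨h1, h2⟩ := Finset.mem_filter.1 he'
        obtain ⟨q1, q2, q3, q4, q5, q6, q7⟩ := hN'm e' (Finset.mem_filter.1 h1).1
        refine Finset.mem_filter.2 ⟨q1, h2, ?_⟩
        rw [dist_comm]
        have := abs_le.1 q5
        exact abs_le.2 ⟨by linarith, by linarith⟩
      exact_mod_cast Finset.card_le_card this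
  rw [hsum0, hsplit]
  have e5 : (L / 2) ^ (-b) = 2 ^ b * L ^ (-b) := by
    rw [Real.div_rpow (by linarith) (by norm_num), Real.rpow_neg (x := 2) (by norm_num), div_inv_eq_mul, mul_comm]
  rw [e5] at hnear
  refine (add_le_add hnear hfarS).trans (le_of_eq ?_)
  ring


/-! ### The `L²` estimate -/

lemma radii_count (R : Finset ℝ) (x L : ℝ) (hL : 0 ≤ L) (hR : ∀ r ∈ R, ∀ r' ∈ R, r ≠ r' → 1 ≤ |r - r'|)
    (hx : ∀ r ∈ R, x ≤ r ∧ r ≤ x + L) : (R.card : ℝ) ≤ L + 2 := by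
  have hinj : Set.InjOn (fun r : ℝ => ⌊r⌋) (R : Set ℝ) := by
    intro r hr r' hr' h
    by_contra hne
    have h1 := hR r hr r' hr' hne
    have h2 := Int.abs_sub_lt_one_of_floor_eq_floor h
    linarith
  have h1 : R.card ≤ (Finset.Icc ⌊x⌋ ⌊x + L⌋).card := by
    refine Finset.card_le_card_of_injOn _ (fun r hr => ?_) hinj
    have := hx r hr
    exact Finset.mem_coe.2 (Finset.mem_Icc.2 ⟨Int.floor_mono this.1, Int.floor_mono this.2⟩)
  rw [Int.card_Icc] at h1
  have h2 : ⌊x⌋ ≤ ⌊x + L⌋ := Int.floor_mono (by linarith)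
  have h3 : (R.card : ℤ) ≤ ⌊x + L⌋ + 1 - ⌊x⌋ := by omega
  have h4 : (R.card : ℝ) ≤ ⌊x + L⌋ + 1 - ⌊x⌋ := by exact_mod_cast h3
  have h5 := Int.floor_le (x + L)
  have h6 := Int.lt_floor_add_one x
  linarith

open Classical in
lemma diag_block (d : ℕ) [NeZero d] (hd : 3 ≤ d) {ψ₀ : Ed d → ℂ} (hψ : Admissible d ψ₀) :
    ∃ A, 0 < A ∧ ∀ (S : Finset (Ed d × ℝ)) (c : Ed d × ℝ → ℂ) (x L : ℝ), SepE S → (∀ e ∈ S, ‖c e‖ ≤ 1) → 0 ≤ L →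
      (∀ e ∈ S, x ≤ e.2 ∧ e.2 ≤ x + L) →
      ‖∑ e ∈ S, c e • vL hψ e‖ ^ 2 ≤ A * (L + 2) * ∑ e ∈ S, e.2 ^ (d - 1) := by
  obtain ⟨A, hA, hH⟩ := H1 d hd hψ
  refine ⟨A, hA, fun S c x L hS hc hL hx => ?_⟩
  set R := S.image Prod.snd with hR
  have hRc : (R.card : ℝ) ≤ L + 2 := by
    apply radii_count R x L hL
    · intro r hr r' hr' hne
      obtain ⟨e, he, rfl⟩ := Finset.mem_image.1 hr
      obtain ⟨e', he', rfl⟩ := Finset.mem_image.1 hr'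
      exact hS.2.2 e he e' he' hne
    · intro r hr
      obtain ⟨e, he, rfl⟩ := Finset.mem_image.1 hr
      exact hx e he
  have hmap : ∀ e ∈ S, e.2 ∈ R := fun e he => Finset.mem_image_of_mem _ he
  have hone : ∀ r ∈ R, ‖∑ e ∈ S.filter (fun e => e.2 = r), c e • vL hψ e‖ ^ 2
      ≤ A * ∑ e ∈ S.filter (fun e => e.2 = r), e.2 ^ (d - 1) := by
    intro r hr
    have hr0 : 0 < r := by
      obtain ⟨e, he, rfl⟩ := Finset.mem_image.1 hr
      linarith [hS.1 e he]
    set Sr := S.filter (fun e => e.2 = r) with hSr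
    have hinj : Set.InjOn Prod.fst (Sr : Set (Ed d × ℝ)) := by
      intro e he e' he' h
      have h1 := (Finset.mem_filter.1 (Finset.mem_coe.1 he)).2
      have h2 := (Finset.mem_filter.1 (Finset.mem_coe.1 he')).2
      exact Prod.ext h (h1.trans h2.symm)
    have e1 : ∑ e ∈ Sr, c e • vL hψ e = ∑ y ∈ Sr.image Prod.fst, c (y, r) • vL hψ (y, r) := by
      rw [Finset.sum_image hinj]
      refine Finset.sum_congr rfl fun e he => ?_
      rw [← (Finset.mem_filter.1 he).2]
    have e2 : ∑ e ∈ Sr, e.2 ^ (d - 1) = r ^ (d - 1) * (Sr.image Prod.fst).card := by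
      rw [Finset.card_image_of_injOn hinj, Finset.sum_congr rfl (g := fun _ => r ^ (d - 1))
        (fun e he => by rw [(Finset.mem_filter.1 he).2])]
      simp [mul_comm]
    rw [e1, e2, ← mul_assoc]
    apply hH r hr0
    · intro y hy y' hy' hne
      obtain ⟨e, he, rfl⟩ := Finset.mem_image.1 hy
      obtain ⟨e', he', rfl⟩ := Finset.mem_image.1 hy'
      exact hS.2.1 e (Finset.mem_filter.1 he).1 e' (Finset.mem_filter.1 he').1 hne
    · intro y hy
      obtain ⟨e, he, rfl⟩ := Finset.mem_image.1 hy
      obtain ⟨h1, h2⟩ := Finset.mem_filter.1 he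
      rw [← h2]; exact hc e h1
  rw [← Finset.sum_fiberwise_of_maps_to hmap, ← Finset.sum_fiberwise_of_maps_to hmap]
  calc _ ≤ (∑ r ∈ R, ‖∑ e ∈ S.filter (fun e => e.2 = r), c e • vL hψ e‖) ^ 2 := by
        gcongr; exact norm_sum_le _ _
    _ ≤ R.card * ∑ r ∈ R, ‖∑ e ∈ S.filter (fun e => e.2 = r), c e • vL hψ e‖ ^ 2 := sq_sum_le_card_mul_sum_sq
    _ ≤ (L + 2) * ∑ r ∈ R, A * ∑ e ∈ S.filter (fun e => e.2 = r), e.2 ^ (d - 1) := by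
        refine mul_le_mul hRc (Finset.sum_le_sum hone) ?_ (by positivity)
        exact Finset.sum_nonneg fun _ _ => by positivity
    _ = _ := by rw [← Finset.mul_sum]; ring

lemma SepE.subset {d : ℕ} {E S : Finset (Ed d × ℝ)} (h : SepE E) (hS : S ⊆ E) : SepE S :=
  ⟨fun e he => h.1 e (hS he), fun e he e' he' => h.2.1 e (hS he) e' (hS he'),
    fun e he e' he' => h.2.2 e (hS he) e' (hS he')⟩

open Classical in
lemma offdiag_all (d : ℕ) [NeZero d] (hd : 4 ≤ d) {ψ₀ : Ed d → ℂ} (hψ : Admissible d ψ₀) :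
    ∃ C, 0 < C ∧ ∀ (E : Finset (Ed d × ℝ)) (u L : ℝ), SepE E → 0 ≤ u → 2 ≤ L → Dens E u →
      ∑ e ∈ E, ∑ e' ∈ E.filter (fun e' => L ≤ e.2 ∧ L ≤ e'.2 ∧ L ≤ |e.2 - e'.2|), ‖inner ℂ (vL hψ e) (vL hψ e')‖
        ≤ C * u * L ^ (-(((d : ℝ) - 3) / 2)) * ∑ e ∈ E, e.2 ^ (d - 1) := by
  obtain ⟨A, hA, hH2⟩ := H2 d (by omega) hψ
  obtain ⟨C, hC, hoff⟩ := offdiag_one d hd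
  refine ⟨2 * (C * A), by positivity, fun E u L hE hu hL hD => ?_⟩
  set k : Ed d × ℝ → Ed d × ℝ → ℝ := fun e e' => ‖inner ℂ (vL hψ e) (vL hψ e')‖ with hk
  have hsymm : ∀ e e', k e e' = k e' e := fun e e' => norm_inner_symm _ _
  have hpos : ∀ e e', 0 ≤ k e e' := fun e e' => norm_nonneg _
  have h1 : ∀ e ∈ E, ∑ e' ∈ E.filter (fun e' => L ≤ e'.2 ∧ e'.2 ≤ e.2 ∧ L ≤ |e.2 - e'.2|), k e e'
      ≤ C * A * u * L ^ (-(((d : ℝ) - 3) / 2)) * e.2 ^ (d - 1) := by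
    intro e he
    have hr : 0 < e.2 := by linarith [hE.1 e he]
    refine hoff E u A L hu hA hL hD e he hr (k e) ?_ ?_
    · intro e' he' hne
      exact hH2 e e' hr (by linarith [hE.1 e' he']) hne
    · intro e' he' hne
      exact H3 hψ e e' hr (by linarith [hE.1 e' he']) (norm_ne_zero_iff.1 hne)
  set D : Ed d × ℝ → Ed d × ℝ → Prop := fun e e' => L ≤ e'.2 ∧ e'.2 ≤ e.2 ∧ L ≤ |e.2 - e'.2| with hDd
  have h2 : ∑ e ∈ E, ∑ e' ∈ E.filter (fun e' => L ≤ e.2 ∧ L ≤ e'.2 ∧ L ≤ |e.2 - e'.2|), k e e'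
      ≤ ∑ e ∈ E, ∑ e' ∈ E, ((if D e e' then k e e' else 0) + (if D e' e then k e' e else 0)) := by
    refine Finset.sum_le_sum fun e _ => ?_
    rw [Finset.sum_filter]
    refine Finset.sum_le_sum fun e' _ => ?_
    have p1 := hpos e e'
    have p2 := hpos e' e
    have n1 : 0 ≤ (if D e e' then k e e' else 0) := by split_ifs <;> linarith
    have n2 : 0 ≤ (if D e' e then k e' e else 0) := by split_ifs <;> linarith
    by_cases h : L ≤ e.2 ∧ L ≤ e'.2 ∧ L ≤ |e.2 - e'.2|
    · rw [if_pos h]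
      rcases le_total e'.2 e.2 with hle | hle
      · rw [if_pos (show D e e' from ⟨h.2.1, hle, h.2.2⟩)]; linarith
      · rw [if_pos (show D e' e from ⟨h.1, hle, by rw [abs_sub_comm]; exact h.2.2⟩)]; linarith [hsymm e e']
    · rw [if_neg h]; linarith
  refine h2.trans ?_
  simp only [Finset.sum_add_distrib]
  rw [Finset.sum_comm (f := fun e e' => if D e' e then k e' e else 0)]
  have h3 : ∑ e ∈ E, ∑ e' ∈ E, (if D e e' then k e e' else 0)
      ≤ C * A * u * L ^ (-(((d : ℝ) - 3) / 2)) * ∑ e ∈ E, e.2 ^ (d - 1) := by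
    rw [Finset.mul_sum]
    refine Finset.sum_le_sum fun e he => ?_
    rw [← Finset.sum_filter]
    exact h1 e he
  linarith

open Classical in
lemma L2_bound (d : ℕ) [NeZero d] (hd : 4 ≤ d) {ψ₀ : Ed d → ℂ} (hψ : Admissible d ψ₀) :
    ∃ C, 0 < C ∧ ∀ (E : Finset (Ed d × ℝ)) (u : ℝ) (c : Ed d × ℝ → ℂ), SepE E → 1 ≤ u → Dens E u →
      (∀ e ∈ E, ‖c e‖ ≤ 1) →
      ‖∑ e ∈ E, c e • vL hψ e‖ ^ 2 ≤ C * u ^ (2 / ((d : ℝ) - 1)) * ∑ e ∈ E, e.2 ^ (d - 1) := by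
  obtain ⟨A, hA, hdiag⟩ := diag_block d (by omega) hψ
  obtain ⟨B, hB, hoff⟩ := offdiag_all d hd hψ
  have hd4 : (4 : ℝ) ≤ d := by exact_mod_cast hd
  refine ⟨9 * (4 * A + B), by positivity, fun E u c hE hu hD hc => ?_⟩
  set U := u ^ (2 / ((d : ℝ) - 1)) with hU
  have hU1 : 1 ≤ U := Real.one_le_rpow hu (by apply div_nonneg <;> linarith)
  set L := 2 * U with hL
  have hL2 : 2 ≤ L := by linarith
  have hL0 : 0 < L := by linarith
  set M := ∑ e ∈ E, e.2 ^ (d - 1) with hM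
  have hM0 : 0 ≤ M := Finset.sum_nonneg fun e he => by have := hE.1 e he; positivity
  have huL : u * L ^ (-(((d : ℝ) - 3) / 2)) ≤ U := by
    have hu0 : 0 < u := by linarith
    calc u * L ^ (-(((d : ℝ) - 3) / 2)) ≤ u * U ^ (-(((d : ℝ) - 3) / 2)) := by
          gcongr u * ?_
          exact Real.rpow_le_rpow_of_nonpos (by linarith) (by linarith) (by linarith)
      _ = U := by
          rw [hU, ← Real.rpow_mul hu0.le]
          nth_rewrite 1 [← Real.rpow_one u]
          rw [← Real.rpow_add hu0]
          congr 1
          have : (d : ℝ) - 1 ≠ 0 := by linarith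
          field_simp; ring
  set μ : Ed d × ℝ → ℕ := fun e => ⌊e.2 / L⌋₊ with hμ
  have key : ∀ S ⊆ E, (∀ e ∈ S, ∀ e' ∈ S, μ e ≠ μ e' → L ≤ e.2 ∧ L ≤ e'.2 ∧ L ≤ |e.2 - e'.2|) →
      ‖∑ e ∈ S, c e • vL hψ e‖ ^ 2 ≤ (4 * A + B) * U * M := by
    intro S hSE hS
    refine (hilbert_block S μ (fun e => c e • vL hψ e)).trans ?_
    have p1 : ∑ m ∈ S.image μ, ‖∑ e ∈ S.filter (fun e => μ e = m), c e • vL hψ e‖ ^ 2 ≤ 4 * A * U * M := by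
      have q1 : ∀ m ∈ S.image μ, ‖∑ e ∈ S.filter (fun e => μ e = m), c e • vL hψ e‖ ^ 2
          ≤ (A * (L + 2)) * ∑ e ∈ S.filter (fun e => μ e = m), e.2 ^ (d - 1) := by
        intro m _
        refine hdiag _ c (m * L) L (hE.subset ((Finset.filter_subset _ _).trans hSE))
          (fun e he => hc e (hSE (Finset.mem_filter.1 he).1)) hL0.le ?_
        intro e he
        obtain ⟨h1, h2⟩ := Finset.mem_filter.1 he
        have hr := hE.1 e (hSE h1)
        have h3 : (⌊e.2 / L⌋₊ : ℝ) ≤ e.2 / L := Nat.floor_le (by positivity)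
        have h4 := Nat.lt_floor_add_one (e.2 / L)
        rw [show ⌊e.2 / L⌋₊ = m from h2] at h3 h4
        rw [le_div_iff₀ hL0] at h3
        rw [div_lt_iff₀ hL0] at h4
        exact ⟨h3, by linarith⟩
      refine (Finset.sum_le_sum q1).trans ?_
      rw [← Finset.mul_sum, Finset.sum_fiberwise_of_maps_to (fun e he => Finset.mem_image_of_mem _ he)]
      have q2 : ∑ e ∈ S, e.2 ^ (d - 1) ≤ M :=
        Finset.sum_le_sum_of_subset_of_nonneg hSE fun e he _ => by have := hE.1 e he; positivity
      have q3 : 0 ≤ ∑ e ∈ S, e.2 ^ (d - 1) :=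
        Finset.sum_nonneg fun e he => by have := hE.1 e (hSE he); positivity
      have q4 : A * (L + 2) ≤ 4 * A * U := by rw [hL]; nlinarith
      exact mul_le_mul q4 q2 q3 (by positivity)
    have p2 : ∑ e ∈ S, ∑ e' ∈ S.filter (fun e' => μ e ≠ μ e'), ‖inner ℂ (c e • vL hψ e) (c e' • vL hψ e')‖
        ≤ B * U * M := by
      refine le_trans ?_ ((hoff E u L hE (by linarith) hL2 hD).trans ?_)
      · refine le_trans ?_ (Finset.sum_le_sum_of_subset_of_nonneg hSE fun _ _ _ => Finset.sum_nonneg fun _ _ => norm_nonneg _)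
        refine Finset.sum_le_sum fun e he => ?_
        refine le_trans (Finset.sum_le_sum (g := fun e' => ‖inner ℂ (vL hψ e) (vL hψ e')‖) fun e' he' => ?_) ?_
        · rw [inner_smul_left, inner_smul_right, norm_mul, norm_mul, RCLike.norm_conj]
          have c1 := hc e (hSE he)
          have c2 := hc e' (hSE (Finset.mem_filter.1 he').1)
          refine mul_le_of_le_one_left (by positivity) c1 |>.trans ?_
          exact mul_le_of_le_one_left (by positivity) c2
        · refine Finset.sum_le_sum_of_subset_of_nonneg ?_ fun _ _ _ => norm_nonneg _
          intro e' he'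
          obtain ⟨h1, h2⟩ := Finset.mem_filter.1 he'
          exact Finset.mem_filter.2 ⟨hSE h1, hS e he e' h1 h2⟩
      · rw [mul_assoc B u]
        gcongr
    linarith
  -- split into three classes
  set cl : Ed d × ℝ → Fin 3 := fun e => if μ e = 0 then 0 else if μ e % 2 = 0 then 1 else 2 with hcl
  have hsplit : ∑ e ∈ E, c e • vL hψ e = ∑ i : Fin 3, ∑ e ∈ E.filter (fun e => cl e = i), c e • vL hψ e :=
    (Finset.sum_fiberwise E cl _).symm
  have hcls : ∀ i : Fin 3, ‖∑ e ∈ E.filter (fun e => cl e = i), c e • vL hψ e‖ ^ 2 ≤ (4 * A + B) * U * M := by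
    intro i
    apply key _ (Finset.filter_subset _ _)
    intro e he e' he' hne
    obtain ⟨h1, h2⟩ := Finset.mem_filter.1 he
    obtain ⟨h1', h2'⟩ := Finset.mem_filter.1 he'
    have hr := hE.1 e h1
    have hr' := hE.1 e' h1'
    have hcc : cl e = cl e' := h2.trans h2'.symm
    have hfact : 1 ≤ μ e ∧ 1 ≤ μ e' ∧ (μ e + 2 ≤ μ e' ∨ μ e' + 2 ≤ μ e) := by
      simp only [hcl] at hcc
      split_ifs at hcc <;> omega
    have a1 : (μ e : ℝ) * L ≤ e.2 := by
      rw [← le_div_iff₀ hL0]; exact Nat.floor_le (by positivity)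
    have a1' : (μ e' : ℝ) * L ≤ e'.2 := by
      rw [← le_div_iff₀ hL0]; exact Nat.floor_le (by positivity)
    have a2 : e.2 < (μ e + 1) * L := by
      rw [← div_lt_iff₀ hL0]; exact Nat.lt_floor_add_one _
    have a2' : e'.2 < (μ e' + 1) * L := by
      rw [← div_lt_iff₀ hL0]; exact Nat.lt_floor_add_one _
    obtain ⟨f1, f2, f3⟩ := hfact
    have g1 : (1 : ℝ) ≤ μ e := by exact_mod_cast f1
    have g2 : (1 : ℝ) ≤ μ e' := by exact_mod_cast f2
    refine ⟨by nlinarith, by nlinarith, ?_⟩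
    rcases f3 with f3 | f3
    · have g3 : (μ e : ℝ) + 2 ≤ μ e' := by exact_mod_cast f3
      rw [abs_sub_comm]
      refine le_trans ?_ (le_abs_self _)
      nlinarith
    · have g3 : (μ e' : ℝ) + 2 ≤ μ e := by exact_mod_cast f3
      refine le_trans ?_ (le_abs_self _)
      nlinarith
  rw [hsplit]
  calc _ ≤ (∑ i : Fin 3, ‖∑ e ∈ E.filter (fun e => cl e = i), c e • vL hψ e‖) ^ 2 := by
        gcongr; exact norm_sum_le _ _
    _ ≤ (Finset.univ : Finset (Fin 3)).card * ∑ i : Fin 3, ‖∑ e ∈ E.filter (fun e => cl e = i), c e • vL hψ e‖ ^ 2 :=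
        sq_sum_le_card_mul_sum_sq
    _ ≤ 3 * ∑ i : Fin 3, (4 * A + B) * U * M := by
        simp only [Finset.card_univ, Fintype.card_fin]
        push_cast
        refine mul_le_mul_of_nonneg_left (Finset.sum_le_sum fun i _ => hcls i) (by norm_num)
    _ = _ := by simp; ring


open Classical in
lemma supp_measure (d : ℕ) [NeZero d] : ∃ C : ℝ, 0 < C ∧ ∀ (E S : Finset (Ed d × ℝ)) (u : ℝ)
    (ρ : Ed d × ℝ → ℝ), SepE E → S ⊆ E → 0 < u →
    (∀ e ∈ S, 1 / 2 ≤ ρ e ∧ ρ e ≤ e.2 / 2 ∧ u * ρ e ≤ ((E.filter (fun e' => dist e' e ≤ ρ e)).card : ℝ)) →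
    ∃ A : Set (Ed d), MeasurableSet A ∧ (∀ e ∈ S, ∀ x, |‖x - e.1‖ - e.2| ≤ 1 / 5 → x ∈ A) ∧
      volume A ≤ ENNReal.ofReal (C * u⁻¹ * ∑ e ∈ E, e.2 ^ (d - 1)) := by
  set V := (volume (ball (0 : Ed d) 1)).toReal with hV
  have hVt : volume (ball (0 : Ed d) 1) ≠ ∞ := measure_ball_lt_top.ne
  have hV0 : 0 < V := ENNReal.toReal_pos (measure_ball_pos _ _ one_pos).ne' hVt
  have hd0 : 0 < (d : ℝ) := by exact_mod_cast Nat.pos_of_ne_zero (NeZero.ne d)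
  refine ⟨18 * d * 12 ^ (d - 1) * V, by positivity, fun E S u ρ hE hSE hu hρ => ?_⟩
  obtain ⟨w, hwS, hwd, hwc⟩ := Vitali.exists_disjoint_subfamily_covering_enlargement_closedBall
    (↑S : Set (Ed d × ℝ)) (fun e => e) ρ (∑ e ∈ S, ρ e)
    (fun a ha => Finset.single_le_sum (f := ρ) (fun e he => by linarith [(hρ e he).1]) (Finset.mem_coe.1 ha)) 4 (by norm_num)
  set W : Finset (Ed d × ℝ) := S.filter (fun e => e ∈ w) with hW
  have hWS : W ⊆ S := Finset.filter_subset _ _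
  refine ⟨⋃ b ∈ W, annul b.1 b.2 (9 * ρ b), ?_, ?_, ?_⟩
  · refine Finset.measurableSet_biUnion _ fun b _ => ?_
    refine IsClosed.measurableSet ?_
    exact isClosed_le (by fun_prop) (by fun_prop)
  · intro e he x hx
    obtain ⟨b, hb, hsub⟩ := hwc e he
    have hbS : b ∈ S := hwS hb
    have h1 : e ∈ closedBall b (4 * ρ b) := hsub (mem_closedBall_self (by linarith [(hρ e he).1]))
    rw [mem_closedBall, Prod.dist_eq, max_le_iff, Real.dist_eq] at h1
    obtain ⟨h1, h2⟩ := h1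
    have hb1 := (hρ b hbS).1
    refine mem_iUnion₂.2 ⟨b, Finset.mem_filter.2 ⟨hbS, hb⟩, ?_⟩
    show |dist x b.1 - b.2| ≤ 9 * ρ b
    rw [← dist_eq_norm] at hx
    have t1 := dist_triangle x e.1 b.1
    have t2 := dist_triangle x b.1 e.1
    rw [dist_comm b.1 e.1] at t2
    rw [abs_le] at hx h2 ⊢
    constructor <;> linarith [hx.1, hx.2, h2.1, h2.2]
  · have hb : ∀ b ∈ W, volume (annul b.1 b.2 (9 * ρ b)) ≤
        ENNReal.ofReal (18 * d * 12 ^ (d - 1) * V * u⁻¹ *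
          ∑ e ∈ E.filter (fun e' => dist e' b ≤ ρ b), e.2 ^ (d - 1)) := by
      intro b hb
      obtain ⟨h1, h2, h3⟩ := hρ b (hWS hb)
      have hr : 1 ≤ b.2 := hE.1 b (hSE (hWS hb))
      refine (annul_vol d b.1 b.2 (9 * ρ b) (by linarith) (by linarith)).trans ?_
      rw [← ENNReal.ofReal_toReal hVt, ← ENNReal.ofReal_mul (by have : 0 ≤ ρ b := by linarith
                                                                positivity)]
      apply ENNReal.ofReal_le_ofReal
      rw [← hV]
      have h4 : (b.2 + 9 * ρ b) ^ (d - 1) ≤ 6 ^ (d - 1) * b.2 ^ (d - 1) := by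
        rw [← mul_pow]; gcongr; linarith
      have h5 : ρ b ≤ u⁻¹ * ((E.filter (fun e' => dist e' b ≤ ρ b)).card : ℝ) := by
        rw [inv_mul_eq_div, le_div_iff₀ hu]; linarith
      have h6 : ((E.filter (fun e' => dist e' b ≤ ρ b)).card : ℝ) * b.2 ^ (d - 1) ≤
          2 ^ (d - 1) * ∑ e ∈ E.filter (fun e' => dist e' b ≤ ρ b), e.2 ^ (d - 1) := by
        rw [Finset.mul_sum, ← nsmul_eq_mul]
        refine Finset.card_nsmul_le_sum _ _ _ fun e he => ?_
        have h7 := (Finset.mem_filter.1 he).2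
        rw [Prod.dist_eq, max_le_iff, Real.dist_eq, abs_le] at h7
        rw [← mul_pow]
        gcongr
        linarith [h7.2.1]
      have hρ0 : 0 ≤ ρ b := by linarith
      calc 2 * d * (9 * ρ b) * (b.2 + 9 * ρ b) ^ (d - 1) * V
          ≤ 2 * d * (9 * (u⁻¹ * ((E.filter (fun e' => dist e' b ≤ ρ b)).card : ℝ))) * (6 ^ (d - 1) * b.2 ^ (d - 1)) * V := by
            gcongr
        _ = 18 * d * 6 ^ (d - 1) * V * u⁻¹ * (((E.filter (fun e' => dist e' b ≤ ρ b)).card : ℝ) * b.2 ^ (d - 1)) := by ring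
        _ ≤ 18 * d * 6 ^ (d - 1) * V * u⁻¹ * (2 ^ (d - 1) * ∑ e ∈ E.filter (fun e' => dist e' b ≤ ρ b), e.2 ^ (d - 1)) := by
            gcongr
        _ = _ := by
            rw [show (12 : ℝ) = 6 * 2 by norm_num, mul_pow]; ring
    refine (measure_biUnion_finset_le _ _).trans ((Finset.sum_le_sum hb).trans ?_)
    have hnn : ∀ e ∈ E, 0 ≤ e.2 ^ (d - 1) := fun e he => by have := hE.1 e he; positivity
    rw [← ENNReal.ofReal_sum_of_nonneg]
    · apply ENNReal.ofReal_le_ofReal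
      rw [← Finset.mul_sum]
      gcongr
      rw [← Finset.sum_biUnion]
      · refine Finset.sum_le_sum_of_subset_of_nonneg ?_ fun e he _ => hnn e he
        intro e he
        obtain ⟨b, _, he⟩ := Finset.mem_biUnion.1 he
        exact (Finset.mem_filter.1 he).1
      · intro a ha b hb hab
        have := hwd (Finset.mem_filter.1 ha).2 (Finset.mem_filter.1 hb).2 hab
        rw [Function.onFun, Finset.disjoint_left]
        intro e he he'
        exact Set.disjoint_left.1 this (Finset.mem_filter.1 he).2 (Finset.mem_filter.1 he').2
    · intro b _
      have : 0 ≤ ∑ e ∈ E.filter (fun e' => dist e' b ≤ ρ b), e.2 ^ (d - 1) :=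
        Finset.sum_nonneg fun e he => hnn e (Finset.mem_filter.1 he).1
      positivity

lemma eLpNorm_G (d : ℕ) [NeZero d] {ψ₀ : Ed d → ℂ} (hψ : Admissible d ψ₀) (S : Finset (Ed d × ℝ))
    (hS : ∀ e ∈ S, 1 ≤ e.2) (c : Ed d × ℝ → ℂ) (B : ℝ) (hB0 : 0 ≤ B)
    (hB : ‖∑ e ∈ S, c e • vL hψ e‖ ^ 2 ≤ B) :
    eLpNorm (fun x => ∑ e ∈ S, c e * Fyr d ψ₀ e.1 e.2 x) 2 volume ≤ ENNReal.ofReal (Real.sqrt B) := by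
  have h1 : ∑ e ∈ S, c e • vL hψ e = SchwartzMap.toLpCLM ℂ ℂ 2 volume (∑ e ∈ S, c e • vS hψ e) := by
    simp only [map_sum, map_smul, vL]
  have h2 : ⇑(∑ e ∈ S, c e • vS hψ e) = fun x => ∑ e ∈ S, c e * Fyr d ψ₀ e.1 e.2 x := by
    ext x
    rw [SchwartzMap.sum_apply]
    refine Finset.sum_congr rfl fun e he => ?_
    rw [SchwartzMap.smul_apply, vS_coe hψ e (by linarith [hS e he]), smul_eq_mul]
  have h3 := SchwartzMap.norm_toLp (p := 2) (μ := volume) (f := ∑ e ∈ S, c e • vS hψ e)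
  have h4 : ‖∑ e ∈ S, c e • vL hψ e‖ ≤ Real.sqrt B := Real.le_sqrt_of_sq_le hB
  rw [h1, SchwartzMap.toLpCLM_apply, h3, h2] at h4
  refine (ENNReal.le_ofReal_iff_toReal_le ?_ (Real.sqrt_nonneg _)).2 h4
  rw [← h2]
  exact (SchwartzMap.memLp _ 2 volume).2.ne

lemma piece_bound (d : ℕ) [NeZero d] (hd : 4 ≤ d) (p : ℝ) (hp1 : 1 < p) (hp2 : p < 2)
    {ψ₀ : Ed d → ℂ} (hψ : Admissible d ψ₀) :
    ∃ C : ℝ, 0 < C ∧ ∀ (E S : Finset (Ed d × ℝ)) (u : ℝ) (c : Ed d × ℝ → ℂ)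
    (A : Set (Ed d)) (V : ℝ), SepE S → S ⊆ E → (∀ e ∈ E, 1 ≤ e.2) → 1 ≤ u → Dens S u → (∀ e ∈ S, ‖c e‖ ≤ 1) →
    MeasurableSet A → (∀ e ∈ S, ∀ x, |‖x - e.1‖ - e.2| ≤ 1 / 5 → x ∈ A) → 0 ≤ V →
      volume A ≤ ENNReal.ofReal (V * u⁻¹ * ∑ e ∈ E, e.2 ^ (d - 1)) →
    eLpNorm (fun x => ∑ e ∈ S, c e * Fyr d ψ₀ e.1 e.2 x) (ENNReal.ofReal p) volume ≤
      ENNReal.ofReal (C * V ^ (1 / p - 1 / 2) * u ^ (-(1 / p - 1 / 2 - 1 / ((d : ℝ) - 1))) *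
        (∑ e ∈ E, e.2 ^ (d - 1)) ^ (1 / p)) := by
  obtain ⟨C, hC, hL2⟩ := L2_bound d hd hψ
  refine ⟨C ^ (1 / 2 : ℝ), by positivity, fun E S u c A V hS hSE hE hu hD hc hA hsup hV hvol => ?_⟩
  have hd4 : (4 : ℝ) ≤ d := by exact_mod_cast hd
  have hp0 : 0 < p := by linarith
  have hu0 : 0 < u := by linarith
  set M := ∑ e ∈ E, e.2 ^ (d - 1) with hM
  have hM0 : 0 ≤ M := Finset.sum_nonneg fun e he => by have := hE e he; positivity
  set G : Ed d → ℂ := fun x => ∑ e ∈ S, c e * Fyr d ψ₀ e.1 e.2 x with hG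
  have hcont : Continuous G := by
    rw [hG]
    refine continuous_finsetSum _ fun e he => ?_
    have := (Fyr_smooth hψ e.1 e.2 (by linarith [hS.1 e he])).continuous
    fun_prop
  have hGA : Function.support G ⊆ A := by
    intro x hx
    obtain ⟨e, he, hne⟩ := Finset.exists_ne_zero_of_sum_ne_zero hx
    exact hsup e he x (Fyr_supp hψ e.1 e.2 x (right_ne_zero_of_mul hne))
  have e1 : eLpNorm G (ENNReal.ofReal p) volume = eLpNorm G (ENNReal.ofReal p) (volume.restrict A) :=
    (eLpNorm_restrict_eq_of_support_subset hGA).symm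
  have e2 : eLpNorm G 2 volume ≤ ENNReal.ofReal (Real.sqrt (C * u ^ (2 / ((d : ℝ) - 1)) * M)) := by
    refine eLpNorm_G d hψ S hS.1 c _ (by positivity) ((hL2 S u c hS hu hD hc).trans ?_)
    gcongr
    exact Finset.sum_le_sum_of_subset_of_nonneg hSE fun e he _ => by have := hE e he; positivity
  have hexp : 0 ≤ 1 / p - 1 / 2 := by
    rw [sub_nonneg]; exact one_div_le_one_div_of_le hp0 hp2.le
  have e3 := eLpNorm_le_eLpNorm_mul_rpow_measure_univ (μ := volume.restrict A) (f := G)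
    (p := ENNReal.ofReal p) (q := 2) (by
      rw [ENNReal.ofReal_le_iff_le_toReal (by simp)]; simpa using hp2.le) hcont.aestronglyMeasurable
  rw [e1]
  refine e3.trans ?_
  rw [ENNReal.toReal_ofReal hp0.le, Measure.restrict_apply_univ]
  have e4 : eLpNorm G 2 (volume.restrict A) ≤ eLpNorm G 2 volume := eLpNorm_mono_measure _ Measure.restrict_le_self
  simp only [ENNReal.toReal_ofNat]
  calc _ ≤ ENNReal.ofReal (Real.sqrt (C * u ^ (2 / ((d : ℝ) - 1)) * M)) *
        (ENNReal.ofReal (V * u⁻¹ * M)) ^ (1 / p - 1 / 2) := by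
        gcongr
        exact e4.trans e2
    _ = ENNReal.ofReal (Real.sqrt (C * u ^ (2 / ((d : ℝ) - 1)) * M) * (V * u⁻¹ * M) ^ (1 / p - 1 / 2)) := by
        rw [ENNReal.ofReal_rpow_of_nonneg (by positivity) hexp, ENNReal.ofReal_mul (Real.sqrt_nonneg _)]
    _ ≤ _ := by
        apply ENNReal.ofReal_le_ofReal
        apply le_of_eq
        rw [Real.sqrt_eq_rpow, Real.mul_rpow (by positivity) hM0, Real.mul_rpow (by positivity) (by positivity),
          Real.mul_rpow (by positivity) hM0, Real.mul_rpow (by positivity) (by positivity),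
          ← Real.rpow_mul hu0.le, Real.inv_rpow hu0.le, ← Real.rpow_neg hu0.le]
        have k1 : M ^ (1 / p) = M ^ (1 / 2 : ℝ) * M ^ (1 / p - 1 / 2) := by
          rw [← Real.rpow_add_of_nonneg hM0 (by norm_num) hexp]; congr 1; ring
        have k2 : u ^ (-(1 / p - 1 / 2 - 1 / ((d : ℝ) - 1))) =
            u ^ (2 / ((d : ℝ) - 1) * (1 / 2)) * u ^ (-(1 / p - 1 / 2)) := by
          rw [← Real.rpow_add hu0]; congr 1; ring
        rw [k1, k2]; ring

lemma mass_le (d : ℕ) (E : Finset (Ed d × ℝ)) (hE : ∀ e ∈ E, 1 ≤ e.2) :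
    ENNReal.ofReal (∑ e ∈ E, e.2 ^ (d - 1)) ≤ ENNReal.ofReal (2 ^ (d - 1)) *
      ∑' k : ℕ, 2 ^ (k * (d - 1)) *
                ((E.filter
                    (fun e => e.2 ∈ Set.Ico ((2 : ℝ) ^ k) ((2 : ℝ) ^ (k + 1)))).card
                  : ℝ≥0∞) := by
  have h1 : ∀ k : ℕ, (2 : ℝ≥0∞) ^ (k * (d - 1)) *
      ((E.filter (fun e => e.2 ∈ Set.Ico ((2 : ℝ) ^ k) ((2 : ℝ) ^ (k + 1)))).card : ℝ≥0∞) =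
      ∑ e ∈ E, if e.2 ∈ Set.Ico ((2 : ℝ) ^ k) ((2 : ℝ) ^ (k + 1)) then (2 : ℝ≥0∞) ^ (k * (d - 1)) else 0 := by
    intro k
    rw [← Finset.sum_filter, Finset.sum_const, nsmul_eq_mul, mul_comm]
  simp only [h1]
  rw [Summable.tsum_finsetSum (fun _ _ => ENNReal.summable),
    ENNReal.ofReal_sum_of_nonneg (fun e he => by have := hE e he; positivity), Finset.mul_sum]
  refine Finset.sum_le_sum fun e he => ?_
  have hr := hE e he
  obtain ⟨g1, g2⟩ := dyadic_index e.2 hr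
  set k := Nat.log 2 ⌊e.2⌋₊
  refine le_trans ?_ (mul_le_mul_right (ENNReal.le_tsum k) _)
  rw [if_pos ⟨g1, g2⟩]
  have : (2 : ℝ≥0∞) ^ (k * (d - 1)) = ENNReal.ofReal (2 ^ (k * (d - 1))) := by
    rw [ENNReal.ofReal_pow (by norm_num)]; simp
  rw [this, ← ENNReal.ofReal_mul (by positivity)]
  apply ENNReal.ofReal_le_ofReal
  rw [pow_mul, ← mul_pow]
  gcongr
  rw [pow_succ] at g2; linarith

open Classical in
lemma main_aux (d : ℕ) [NeZero d] (hd : 4 ≤ d) (p : ℝ) (hp1 : 1 < p)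
    (hpd : p < (2 * (d : ℝ) - 2) / ((d : ℝ) + 1)) {ψ₀ : Ed d → ℂ} (hψ : Admissible d ψ₀) :
    ∃ C : ℝ, 0 < C ∧ ∀ (E : Finset (Ed d × ℝ)) (c : Ed d × ℝ → ℂ), SepE E → (∀ e ∈ E, ‖c e‖ ≤ 1) →
      eLpNorm (fun x => ∑ e ∈ E, c e * Fyr d ψ₀ e.1 e.2 x) (ENNReal.ofReal p) volume ≤
        ENNReal.ofReal (C * (∑ e ∈ E, e.2 ^ (d - 1)) ^ (1 / p)) := by
  have hd4 : (4 : ℝ) ≤ d := by exact_mod_cast hd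
  have hp0 : 0 < p := by linarith
  rw [lt_div_iff₀ (by linarith)] at hpd
  have hp2 : p < 2 := by nlinarith
  obtain ⟨V, hV, hsupp⟩ := supp_measure d
  obtain ⟨C, hC, hpiece⟩ := piece_bound d hd p hp1 hp2 hψ
  set δ := 1 / p - 1 / 2 - 1 / ((d : ℝ) - 1) with hδ
  have hδ0 : 0 < δ := by
    have : δ = (2 * d - 2 - p * (d + 1)) / (2 * p * (d - 1)) := by
      have : (d : ℝ) - 1 ≠ 0 := by linarith
      rw [hδ]; field_simp; ring
    rw [this]
    apply div_pos (by linarith)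
    have : 0 < (d : ℝ) - 1 := by linarith
    positivity
  set q := (2 : ℝ) ^ (-δ) with hq
  have hq0 : 0 < q := by positivity
  have hq1 : q < 1 := Real.rpow_lt_one_of_one_lt_of_neg (by norm_num) (by linarith)
  have hq2 : 0 < 1 - q := by linarith
  set K := C * V ^ (1 / p - 1 / 2) with hK
  have hK0 : 0 < K := by positivity
  refine ⟨K * (1 - q)⁻¹, by positivity, fun E c hE hc => ?_⟩
  set M := ∑ e ∈ E, e.2 ^ (d - 1) with hM
  have hM0 : 0 ≤ M := Finset.sum_nonneg fun e he => by have := hE.1 e he; positivity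
  set Q : Ed d × ℝ → ℕ → Prop := fun e n => ∃ ρ : ℝ, 1 / 2 ≤ ρ ∧ ρ ≤ e.2 / 2 ∧
    (2 : ℝ) ^ n * ρ ≤ ((E.filter (fun e' => dist e' e ≤ ρ)).card : ℝ) with hQ
  set N := 2 * E.card with hN
  have hQN : ∀ e n, Q e n → n ≤ N := by
    rintro e n ⟨ρ, h1, h2, h3⟩
    have h4 : ((E.filter (fun e' => dist e' e ≤ ρ)).card : ℝ) ≤ E.card := by
      exact_mod_cast Finset.card_le_card (Finset.filter_subset _ _)
    have h5 : (2 : ℝ) ^ n ≤ N := by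
      rw [hN]; push_cast
      have : 0 < (2 : ℝ) ^ n := by positivity
      nlinarith
    have h6 : 2 ^ n ≤ N := by exact_mod_cast h5
    exact (Nat.lt_two_pow_self).le.trans h6
  have hQ0 : ∀ e ∈ E, Q e 0 := by
    intro e he
    refine ⟨1 / 2, le_rfl, by linarith [hE.1 e he], ?_⟩
    have : 1 ≤ (E.filter (fun e' => dist e' e ≤ 1 / 2)).card :=
      Finset.card_pos.2 ⟨e, Finset.mem_filter.2 ⟨he, by simp⟩⟩
    have : (1 : ℝ) ≤ (E.filter (fun e' => dist e' e ≤ 1 / 2)).card := by exact_mod_cast this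
    linarith
  set ν : Ed d × ℝ → ℕ := fun e => Nat.findGreatest (Q e) N with hν
  have hνQ : ∀ e ∈ E, Q e (ν e) := fun e he => Nat.findGreatest_spec (Nat.zero_le _) (hQ0 e he)
  have hνN : ∀ e, ν e ≤ N := fun e => Nat.findGreatest_le _
  have hνmax : ∀ e, ¬ Q e (ν e + 1) := fun e h =>
    Nat.findGreatest_is_greatest (Nat.lt_succ_self (ν e)) (hQN e _ h) h
  set S : ℕ → Finset (Ed d × ℝ) := fun n => E.filter (fun e => ν e = n) with hS
  have hSE : ∀ n, S n ⊆ E := fun n => Finset.filter_subset _ _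
  have hpc : ∀ n, eLpNorm (fun x => ∑ e ∈ S n, c e * Fyr d ψ₀ e.1 e.2 x) (ENNReal.ofReal p) volume
      ≤ ENNReal.ofReal (K * M ^ (1 / p) * q ^ n) := by
    intro n
    have hspec : ∀ e, ∃ ρ : ℝ, e ∈ S n → 1 / 2 ≤ ρ ∧ ρ ≤ e.2 / 2 ∧
        (2 : ℝ) ^ n * ρ ≤ ((E.filter (fun e' => dist e' e ≤ ρ)).card : ℝ) := by
      intro e
      by_cases he : e ∈ S n
      · obtain ⟨h1, h2⟩ := Finset.mem_filter.1 he
        obtain ⟨ρ, h3⟩ := hνQ e h1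
        rw [h2] at h3
        exact ⟨ρ, fun _ => h3⟩
      · exact ⟨0, fun h => absurd h he⟩
    choose ρ hρ using hspec
    obtain ⟨A, hA, hsA, hvA⟩ := hsupp E (S n) (2 ^ n) ρ hE (hSE n) (by positivity) hρ
    have hD : Dens (S n) (2 ^ n) := by
      intro e he ρ h1 h2
      obtain ⟨he1, he2⟩ := Finset.mem_filter.1 he
      by_contra! hlt
      apply hνmax e
      refine ⟨ρ, h1, h2, ?_⟩
      rw [he2, pow_succ]
      have : (((S n).filter (fun e' => dist e' e ≤ ρ)).card : ℝ) ≤ (E.filter (fun e' => dist e' e ≤ ρ)).card := by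
        exact_mod_cast Finset.card_le_card (Finset.filter_subset_filter _ (hSE n))
      linarith
    have := hpiece E (S n) (2 ^ n) c A V (hE.subset (hSE n)) (hSE n) hE.1 (one_le_pow₀ (by norm_num)) hD
      (fun e he => hc e (hSE n he)) hA hsA hV.le hvA
    refine this.trans (le_of_eq ?_)
    have : ((2 : ℝ) ^ n) ^ (-δ) = q ^ n := by
      rw [hq, ← Real.rpow_natCast, ← Real.rpow_natCast, ← Real.rpow_mul (by norm_num), ← Real.rpow_mul (by norm_num),
        mul_comm]
    rw [this]; congr 1; ring
  have hsum : (fun x => ∑ e ∈ E, c e * Fyr d ψ₀ e.1 e.2 x) =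
      ∑ n ∈ Finset.range (N + 1), fun x => ∑ e ∈ S n, c e * Fyr d ψ₀ e.1 e.2 x := by
    ext x
    rw [Finset.sum_apply]
    exact (Finset.sum_fiberwise_of_maps_to (fun e _ => Finset.mem_range.2 (Nat.lt_succ_of_le (hνN e))) _).symm
  rw [hsum]
  refine (eLpNorm_sum_le ?_ ?_).trans ((Finset.sum_le_sum fun n _ => hpc n).trans ?_)
  · intro n _
    refine Continuous.aestronglyMeasurable ?_
    refine continuous_finsetSum _ fun e he => ?_
    have := (Fyr_smooth hψ e.1 e.2 (by linarith [hE.1 e (hSE n he)])).continuous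
    fun_prop
  · rw [← ENNReal.ofReal_one]; exact ENNReal.ofReal_le_ofReal hp1.le
  · rw [← ENNReal.ofReal_sum_of_nonneg (fun n _ => by positivity)]
    apply ENNReal.ofReal_le_ofReal
    rw [← Finset.mul_sum]
    have : ∑ n ∈ Finset.range (N + 1), q ^ n ≤ (1 - q)⁻¹ := by
      rw [← tsum_geometric_of_lt_one hq0.le hq1]
      exact (summable_geometric_of_lt_one hq0.le hq1).sum_le_tsum _ fun _ _ => by positivity
    calc _ ≤ K * M ^ (1 / p) * (1 - q)⁻¹ := by gcongr
      _ = _ := by ring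

/-- the main inequality,
`‖∑ c(y,r) F_{y,r}‖_p^p ≲ ∑_k 2^{k(d-1)} #ℰ_k` for `1 < p < (2d-2)/(d+1)`. -/
theorem main_inequality
    (d : ℕ) (hd : 4 ≤ d) (p : ℝ) (hp1 : 1 < p)
    (hpd : p < (2 * (d : ℝ) - 2) / ((d : ℝ) + 1))
    (ψ₀ : Ed d → ℂ) (hψ : Admissible d ψ₀) :
    ∃ C : ℝ, 0 < C ∧
      ∀ (Y : Set (Ed d)) (R : Set ℝ),
        (∀ y ∈ Y, ∀ y' ∈ Y, y ≠ y' → 1 ≤ dist y y') →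
        (∀ r ∈ R, ∀ r' ∈ R, r ≠ r' → 1 ≤ |r - r'|) →
        (∀ r ∈ R, 1 ≤ r) →
        ∀ E : Finset (Ed d × ℝ), (↑E : Set (Ed d × ℝ)) ⊆ Y ×ˢ R →
        ∀ c : Ed d × ℝ → ℂ, (∀ e ∈ E, ‖c e‖ ≤ 1) →
          eLpNorm (fun x => ∑ e ∈ E, c e * Fyr d ψ₀ e.1 e.2 x)
              (ENNReal.ofReal p) volume ^ p ≤
            ENNReal.ofReal C *
              ∑' k : ℕ, 2 ^ (k * (d - 1)) *
                ((E.filter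
                    (fun e => e.2 ∈ Set.Ico ((2 : ℝ) ^ k) ((2 : ℝ) ^ (k + 1)))).card
                  : ℝ≥0∞) := by
  have : NeZero d := ⟨by omega⟩
  have hp0 : 0 < p := by linarith
  obtain ⟨C, hC, hmain⟩ := main_aux d hd p hp1 hpd hψ
  refine ⟨C ^ p * 2 ^ (d - 1), by positivity, fun Y R hY hR hR1 E hE c hc => ?_⟩
  have hsep : SepE E := ⟨fun e he => hR1 _ (hE he).2,
    fun e he e' he' => hY _ (hE he).1 _ (hE he').1, fun e he e' he' => hR _ (hE he).2 _ (hE he').2⟩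
  have hM0 : 0 ≤ ∑ e ∈ E, e.2 ^ (d - 1) :=
    Finset.sum_nonneg fun e he => by have := hsep.1 e he; positivity
  have h1 := ENNReal.rpow_le_rpow (hmain E c hsep hc) hp0.le
  refine h1.trans ?_
  rw [ENNReal.ofReal_rpow_of_nonneg (by positivity) hp0.le, Real.mul_rpow hC.le (by positivity),
    ← Real.rpow_mul hM0, one_div_mul_cancel hp0.ne', Real.rpow_one, ENNReal.ofReal_mul (by positivity),
    ENNReal.ofReal_mul (by positivity), mul_assoc]
  exact mul_le_mul_right (mass_le d E hsep.1) _
end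
end
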